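/- arXiv:1901.06945 — 3 statements merged into one kernel-verified Lean document; each statement's English description precedes it below -/
import Mathlib

section
/- Let V₃ = {(e1,e2,e3) ∈ E³ : e1·e2 = e1·e3 = e2·e3 = 0}. Then V₃ has exactly 1814400 elements and the Weyl group W acts transitively on V₃. Moreover, for every (e1,e2,e3) ∈ V₃ there are exactly 26 roots e ∈ E orthogonal to all of e1, e2, e3; among these 26 roots, exactly two satisfy e1 + e2 + e3 + e ∈ 2Λ, and these two roots are negatives of each other. -/
noncomputable section

/-- The standard dot product on ℝ^8. -/
def dot (a b : Fin 8 → ℝ) : ℝ := ∑ i, a i * b i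

/-- Membership in the E8 lattice Λ: all coordinates are integers or all lie in ℤ + 1/2,
and the coordinates sum to an even integer. -/
def inLambda (a : Fin 8 → ℝ) : Prop :=
  ((∀ i, ∃ n : ℤ, a i = n) ∨ (∀ i, ∃ n : ℤ, a i = n + 1 / 2)) ∧
    ∃ n : ℤ, (∑ i, a i) = 2 * n

/-- The E8 root system E: lattice vectors of squared norm 2. -/
def isRoot (a : Fin 8 → ℝ) : Prop := inLambda a ∧ dot a a = 2

/-- The Weyl group W: linear isometries of ℝ^8 mapping the root system E onto itself. -/
def IsWeyl (w : (Fin 8 → ℝ) ≃ₗ[ℝ] (Fin 8 → ℝ)) : Prop :=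
  (∀ a b : Fin 8 → ℝ, dot (w a) (w b) = dot a b) ∧
    (⇑w '' {a | isRoot a} = {a | isRoot a})

/-!
Fix a family `v` of vectors. Among the roots orthogonal to `v`, call two neighbours if they are not
orthogonal to each other. In an even lattice neighbours are exchanged, up to sign, by the reflection
in a root orthogonal to `v`, so roots with a common neighbour are conjugate under the automorphisms
fixing `v`. For the first members `c₁, …, cₖ` of a reference triple `c` of orthogonal `E8` roots
(`k ≤ 2`, the orthogonal root systems being `E8`, `E7` and `D6`), any root orthogonal to them has a
common neighbour with `cₖ₊₁`; moving one member of a triple into place after the other then takes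
every triple to `c`. The orthogonal root systems of `c` have 240, 126, 60 and 26 elements, whence
`240 * 126 * 60` triples.

If `u` and `u'` both complete `e₁ + e₂ + e₃` to an element of `2Λ`, then `(u - u') / 2` lies in `Λ`
and has even norm, so `u ⬝ᵥ u'` is `2` modulo `4`. By Cauchy-Schwarz it is `2` or `-2`, that is,
`u' = u` or `u' = -u`.
-/

open Matrix Module

lemma ncard_setOf_snd_mem_and_fst_mem {α β : Type*} {S : Set α} {T : α → Set β} {k : ℕ}
    (hS : S.Finite) (hT : ∀ a ∈ S, (T a).Finite) (hk : ∀ a ∈ S, (T a).ncard = k) :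
    {p : β × α | p.2 ∈ S ∧ p.1 ∈ T p.2}.ncard = S.ncard * k := by
  have := hS.fintype
  have (a : S) : Finite (T a) := hT a a.2
  let fiberEquiv : {p : β × α | p.2 ∈ S ∧ p.1 ∈ T p.2} ≃ Σ a : S, T a :=
    { toFun p := ⟨⟨p.1.2, p.2.1⟩, p.1.1, p.2.2⟩
      invFun q := ⟨(q.2, q.1), q.1.2, q.2.2⟩ }
  have card_fiber (a : S) : Nat.card (T a) = k := hk a a.2
  rw [← Nat.card_coe_set_eq, Nat.card_congr fiberEquiv, Nat.card_sigma]
  simp only [card_fiber, Finset.sum_const, Finset.card_univ, smul_eq_mul,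
    ← Nat.card_eq_fintype_card, Nat.card_coe_set_eq]

namespace EvenLattice

variable {ι κ : Type*} [Fintype ι]

/-- The lattice `L` in `ℝ^ι` is even: all its vectors have even squared norm. -/
def IsEven (L : AddSubgroup (ι → ℝ)) : Prop :=
  ∀ x ∈ L, ∃ k : ℤ, x ⬝ᵥ x = 2 * k

/-- The roots of the lattice `L` (its vectors of squared norm 2) that are orthogonal to every
member of the family `v`; the empty family gives all roots. -/
def rootsOrth (L : AddSubgroup (ι → ℝ)) (v : κ → ι → ℝ) : Set (ι → ℝ) :=
  {e | (e ∈ L ∧ e ⬝ᵥ e = 2) ∧ ∀ i, e ⬝ᵥ v i = 0}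

/-- A tuple of pairwise orthogonal roots of the lattice `L`. -/
def IsRootFrame (L : AddSubgroup (ι → ℝ)) {n : ℕ} (e : Fin n → ι → ℝ) : Prop :=
  (∀ i, e i ∈ L ∧ e i ⬝ᵥ e i = 2) ∧ ∀ i j, i < j → e i ⬝ᵥ e j = 0

/-- The automorphism group of the lattice `L`: the linear isometries of `ℝ^ι` preserving `L`. -/
def aut (L : AddSubgroup (ι → ℝ)) : Subgroup ((ι → ℝ) ≃ₗ[ℝ] (ι → ℝ)) where
  carrier := {w | (∀ x y, w x ⬝ᵥ w y = x ⬝ᵥ y) ∧ ∀ x, w x ∈ L ↔ x ∈ L}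
  mul_mem' hv hw := ⟨fun x y ↦ (hv.1 _ _).trans (hw.1 x y), fun x ↦ (hv.2 _).trans (hw.2 x)⟩
  one_mem' := ⟨fun _ _ ↦ rfl, fun _ ↦ Iff.rfl⟩
  inv_mem' {w} hw := ⟨fun x y ↦ by simpa using (hw.1 (w⁻¹ x) (w⁻¹ y)).symm,
    fun x ↦ by simpa using (hw.2 (w⁻¹ x)).symm⟩

/-- The automorphisms of the lattice `L` that fix every member of the family `v`. -/
def autFixing (L : AddSubgroup (ι → ℝ)) (v : κ → ι → ℝ) : Subgroup ((ι → ℝ) ≃ₗ[ℝ] (ι → ℝ)) :=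
  aut L ⊓ fixingSubgroup _ (Set.range v)

/-- The orthogonal reflection of `ℝ^ι` in a vector of squared norm 2. -/
def rootReflection {r : ι → ℝ} (hr : r ⬝ᵥ r = 2) : (ι → ℝ) ≃ₗ[ℝ] (ι → ℝ) :=
  reflection (f := dotProductBilin ℝ ℝ r) hr

variable {L : AddSubgroup (ι → ℝ)} {v : κ → ι → ℝ} {e f r u x y : ι → ℝ}
  {w : (ι → ℝ) ≃ₗ[ℝ] (ι → ℝ)}

lemma rootReflection_apply (hr : r ⬝ᵥ r = 2) (x : ι → ℝ) :
    rootReflection hr x = x - (r ⬝ᵥ x) • r :=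
  reflection_apply x hr

lemma rootReflection_apply_self (hr : r ⬝ᵥ r = 2) : rootReflection hr r = -r :=
  reflection_apply_self hr

lemma mem_autFixing : w ∈ autFixing L v ↔ w ∈ aut L ∧ ∀ i, w (v i) = v i := by
  simp [autFixing, mem_fixingSubgroup_iff]

lemma neg_mem_rootsOrth (he : e ∈ rootsOrth L v) : -e ∈ rootsOrth L v :=
  ⟨⟨L.neg_mem he.1.1, by simpa using he.1.2⟩, fun i ↦ by simpa using he.2 i⟩

lemma map_mem_rootsOrth_iff (hw : w ∈ aut L) :
    w e ∈ rootsOrth L (fun i ↦ w (v i)) ↔ e ∈ rootsOrth L v := by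
  simp only [rootsOrth, Set.mem_ofPred_eq, hw.1, hw.2]

lemma ncard_rootsOrth_map (hw : w ∈ aut L) (v : κ → ι → ℝ) :
    (rootsOrth L fun i ↦ w (v i)).ncard = (rootsOrth L v).ncard := by
  have preimage_eq : w ⁻¹' (rootsOrth L fun i ↦ w (v i)) = rootsOrth L v :=
    Set.ext fun _ ↦ map_mem_rootsOrth_iff hw
  rw [← preimage_eq, Set.ncard_preimage_of_injective_subset_range w.injective
    (by simp [w.surjective.range_eq])]

lemma IsEven.exists_int_dotProduct_eq (hL : IsEven L) (hx : x ∈ L) (hy : y ∈ L) :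
    ∃ k : ℤ, x ⬝ᵥ y = k := by
  obtain ⟨a, ha⟩ := hL x hx
  obtain ⟨b, hb⟩ := hL y hy
  obtain ⟨c, hc⟩ := hL (x + y) (L.add_mem hx hy)
  refine ⟨c - a - b, ?_⟩
  simp only [add_dotProduct, dotProduct_add, dotProduct_comm y x] at hc
  push_cast
  linarith

lemma IsEven.rootReflection_mem_autFixing (hL : IsEven L) (hr : r ∈ rootsOrth L v) :
    rootReflection hr.1.2 ∈ autFixing L v := by
  have map_mem {x} (hx : x ∈ L) : rootReflection hr.1.2 x ∈ L := by
    obtain ⟨k, hk⟩ := hL.exists_int_dotProduct_eq hr.1.1 hx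
    rw [rootReflection_apply, hk, Int.cast_smul_eq_zsmul]
    exact L.sub_mem hx (L.zsmul_mem hr.1.1 k)
  refine mem_autFixing.2 ⟨⟨fun x y ↦ ?_, fun x ↦ ⟨fun h ↦ ?_, map_mem⟩⟩, fun i ↦ ?_⟩
  · simp only [rootReflection_apply, sub_dotProduct, dotProduct_sub, smul_dotProduct,
      dotProduct_smul, smul_eq_mul, hr.1.2, dotProduct_comm x r]
    ring
  · exact involutive_reflection (f := dotProductBilin ℝ ℝ r) hr.1.2 x ▸ map_mem h
  · simp [rootReflection_apply, hr.2 i]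

lemma eq_of_dotProduct_eq_two (he : e ⬝ᵥ e = 2) (hf : f ⬝ᵥ f = 2) (h : e ⬝ᵥ f = 2) : e = f := by
  rw [← sub_eq_zero, ← dotProduct_self_eq_zero]
  simp only [sub_dotProduct, dotProduct_sub, dotProduct_comm f e, he, hf, h]
  norm_num

lemma dotProduct_le_two (he : e ⬝ᵥ e = 2) (hf : f ⬝ᵥ f = 2) : e ⬝ᵥ f ≤ 2 := by
  have h : 0 ≤ (e - f) ⬝ᵥ (e - f) := Finset.sum_nonneg fun i _ ↦ mul_self_nonneg _
  simp only [sub_dotProduct, dotProduct_sub, dotProduct_comm f e, he, hf] at h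
  linarith

lemma IsEven.exists_autFixing_map_eq_of_dotProduct_pos (hL : IsEven L) (he : e ∈ rootsOrth L v)
    (hf : f ∈ rootsOrth L v) (hpos : 0 < e ⬝ᵥ f) : ∃ w ∈ autFixing L v, w e = f := by
  obtain ⟨k, hk⟩ := hL.exists_int_dotProduct_eq he.1.1 hf.1.1
  have hk_le : k ≤ 2 := by exact_mod_cast hk ▸ dotProduct_le_two he.1.2 hf.1.2
  have hk_pos : 0 < k := by exact_mod_cast hk ▸ hpos
  obtain rfl | rfl : k = 1 ∨ k = 2 := by omega
  · have sub_mem : e - f ∈ rootsOrth L v := by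
      refine ⟨⟨L.sub_mem he.1.1 hf.1.1, ?_⟩, fun i ↦ by simp [he.2 i, hf.2 i]⟩
      simp only [sub_dotProduct, dotProduct_sub, dotProduct_comm f e, he.1.2, hf.1.2, hk]
      norm_num
    refine ⟨_, hL.rootReflection_mem_autFixing sub_mem, ?_⟩
    rw [rootReflection_apply, sub_dotProduct, dotProduct_comm f e, he.1.2, hk]
    norm_num
  · exact ⟨1, one_mem _, eq_of_dotProduct_eq_two he.1.2 hf.1.2 (by simpa using hk)⟩

lemma IsEven.exists_autFixing_map_eq_of_dotProduct_ne_zero (hL : IsEven L)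
    (he : e ∈ rootsOrth L v) (hf : f ∈ rootsOrth L v) (hne : e ⬝ᵥ f ≠ 0) :
    ∃ w ∈ autFixing L v, w e = f := by
  rcases hne.lt_or_gt with hneg | hpos
  · obtain ⟨w, hw, hwe⟩ := hL.exists_autFixing_map_eq_of_dotProduct_pos
      (neg_mem_rootsOrth he) hf (by simpa using hneg)
    refine ⟨w * rootReflection he.1.2, mul_mem hw (hL.rootReflection_mem_autFixing he), ?_⟩
    rw [LinearEquiv.mul_apply, rootReflection_apply_self, hwe]
  · exact hL.exists_autFixing_map_eq_of_dotProduct_pos he hf hpos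

lemma IsEven.exists_autFixing_map_eq_of_common_neighbor (hL : IsEven L)
    (he : e ∈ rootsOrth L v) (hf : f ∈ rootsOrth L v)
    (h : ∃ g ∈ rootsOrth L v, e ⬝ᵥ g ≠ 0 ∧ f ⬝ᵥ g ≠ 0) : ∃ w ∈ autFixing L v, w e = f := by
  obtain ⟨g, hg, heg, hfg⟩ := h
  obtain ⟨w₁, hw₁, rfl⟩ := hL.exists_autFixing_map_eq_of_dotProduct_ne_zero he hg heg
  obtain ⟨w₂, hw₂, hf_map⟩ := hL.exists_autFixing_map_eq_of_dotProduct_ne_zero hf hg hfg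
  exact ⟨w₂⁻¹ * w₁, mul_mem (inv_mem hw₂) hw₁, by simp [← hf_map]⟩

lemma isRootFrame_succ_iff {n : ℕ} {e : Fin (n + 1) → ι → ℝ} :
    IsRootFrame L e ↔ IsRootFrame L (Fin.init e) ∧ e (Fin.last n) ∈ rootsOrth L (Fin.init e) := by
  constructor
  · intro he
    refine ⟨⟨fun i ↦ he.1 _, fun i j hij ↦ he.2 _ _ (Fin.castSucc_lt_castSucc_iff.2 hij)⟩,
      he.1 _, fun i ↦ ?_⟩
    rw [dotProduct_comm]
    exact he.2 _ _ (Fin.castSucc_lt_last i)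
  · rintro ⟨he_init, he_last⟩
    refine ⟨Fin.lastCases he_last.1 he_init.1, fun i j hij ↦ ?_⟩
    obtain ⟨i, rfl⟩ := Fin.exists_castSucc_eq.2 (hij.trans_le (Fin.le_last j)).ne
    cases j using Fin.lastCases with
    | last => exact (dotProduct_comm _ _).trans (he_last.2 i)
    | cast j => exact he_init.2 i j (Fin.castSucc_lt_castSucc_iff.1 hij)

lemma exists_aut_map_frame_eq {n : ℕ} {c : Fin n → ι → ℝ}
    (hc : ∀ k : Fin n, ∀ e ∈ rootsOrth L (Fin.take k k.is_le' c),
      ∃ w ∈ autFixing L (Fin.take k k.is_le' c), w e = c k)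
    {m : ℕ} (hm : m ≤ n) {e : Fin m → ι → ℝ} (he : IsRootFrame L e) :
    ∃ w ∈ aut L, ∀ i, w (e i) = Fin.take m hm c i := by
  induction m with
  | zero => exact ⟨1, one_mem _, fun i ↦ i.elim0⟩
  | succ m ih =>
    obtain ⟨he_init, he_last⟩ := isRootFrame_succ_iff.1 he
    obtain ⟨w, hw, hwe⟩ := ih (by omega) he_init
    have last_mem : w (e (Fin.last m)) ∈ rootsOrth L (Fin.take m (by omega) c) :=
      funext hwe ▸ (map_mem_rootsOrth_iff hw).2 he_last
    obtain ⟨w', hw', hw'e⟩ := hc ⟨m, hm⟩ _ last_mem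
    obtain ⟨hw'_aut, hw'_fix⟩ := mem_autFixing.1 hw'
    refine ⟨w' * w, mul_mem hw'_aut hw, Fin.lastCases hw'e fun i ↦ ?_⟩
    exact (congrArg w' (hwe i)).trans (hw'_fix i)

lemma ncard_setOf_isRootFrame (hfin : {x | x ∈ L ∧ x ⬝ᵥ x = 2}.Finite) {n : ℕ} {k : Fin n → ℕ}
    (hk : ∀ m : Fin n, ∀ e : Fin m → ι → ℝ, IsRootFrame L e → (rootsOrth L e).ncard = k m) :
    {e : Fin n → ι → ℝ | IsRootFrame L e}.ncard = ∏ m, k m := by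
  induction n with
  | zero => simp [IsRootFrame, Set.ncard_univ]
  | succ n ih =>
    have frames_finite : {e : Fin n → ι → ℝ | IsRootFrame L e}.Finite :=
      (Set.Finite.pi' fun _ ↦ hfin).subset fun _ he ↦ he.1
    have preimage_eq : {e : Fin (n + 1) → ι → ℝ | IsRootFrame L e} =
        (Fin.snocEquiv fun _ ↦ ι → ℝ).symm ⁻¹' {p | p.2 ∈ {e | IsRootFrame L e} ∧
          p.1 ∈ rootsOrth L p.2} := Set.ext fun _ ↦ isRootFrame_succ_iff
    rw [preimage_eq, Set.ncard_preimage_of_injective_subset_range (Equiv.injective _) (by simp),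
      ncard_setOf_snd_mem_and_fst_mem frames_finite
        (fun _ _ ↦ hfin.subset fun _ hx ↦ hx.1) (hk (Fin.last n)),
      ih fun m ↦ hk m.castSucc, Fin.prod_univ_castSucc]

lemma IsEven.eq_or_eq_neg_of_sub_eq_two_smul (hL : IsEven L) (he : e ⬝ᵥ e = 2)
    (hf : f ⬝ᵥ f = 2) (hx : x ∈ L) (h : e - f = (2 : ℝ) • x) : e = f ∨ e = -f := by
  obtain ⟨k, hk⟩ := hL x hx
  have hef : e ⬝ᵥ f = 2 - 4 * k := by
    have := congrArg (fun z ↦ z ⬝ᵥ z) h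
    simp only [sub_dotProduct, dotProduct_sub, smul_dotProduct, dotProduct_smul, smul_eq_mul,
      dotProduct_comm f e, he, hf, hk] at this
    linarith
  have hle := dotProduct_le_two he hf
  have hge := dotProduct_le_two he (f := -f) (by simpa using hf)
  rw [dotProduct_neg] at hge
  have hk_nonneg : 0 ≤ k := by exact_mod_cast (by linarith : (0 : ℝ) ≤ k)
  have hk_le : k ≤ 1 := by exact_mod_cast (by linarith : (k : ℝ) ≤ 1)
  obtain rfl | rfl : k = 0 ∨ k = 1 := by omega
  · exact .inl (eq_of_dotProduct_eq_two he hf (by simpa using hef))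
  · refine .inr (eq_of_dotProduct_eq_two he (by simpa using hf) ?_)
    rw [dotProduct_neg, hef]
    norm_num

variable [Fintype κ]

/-- The roots `e` of the lattice `L` that are orthogonal to the family `v` and complete its sum
to an element of `2L`. -/
def halvingRoots (L : AddSubgroup (ι → ℝ)) (v : κ → ι → ℝ) : Set (ι → ℝ) :=
  {e ∈ rootsOrth L v | ∃ x ∈ L, ∑ i, v i + e = (2 : ℝ) • x}

lemma map_mem_halvingRoots_iff (hw : w ∈ aut L) :
    w e ∈ halvingRoots L (fun i ↦ w (v i)) ↔ e ∈ halvingRoots L v := by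
  refine and_congr (map_mem_rootsOrth_iff hw) ?_
  rw [w.surjective.exists]
  simp only [hw.2, ← map_sum, ← map_add, ← map_smul, w.injective.eq_iff]

lemma IsEven.halvingRoots_eq_pair (hL : IsEven L) (hu : u ∈ halvingRoots L v) :
    halvingRoots L v = {u, -u} := by
  obtain ⟨hu, x, hx, hxu⟩ := hu
  ext e
  refine ⟨fun ⟨he, y, hy, hye⟩ ↦ ?_, ?_⟩
  · refine hL.eq_or_eq_neg_of_sub_eq_two_smul he.1.2 hu.1.2 (L.sub_mem hy hx) ?_
    rw [smul_sub, ← hye, ← hxu]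
    abel
  · rintro (rfl | rfl)
    · exact ⟨hu, x, hx, hxu⟩
    · refine ⟨neg_mem_rootsOrth hu, x - u, L.sub_mem hx hu.1.1, ?_⟩
      rw [smul_sub, ← hxu, two_smul]
      abel

end EvenLattice

namespace E8

open EvenLattice

/-- The vector of `ℝ⁸` with doubled coordinates `x`; it turns the half-integral coordinates of the
`E8` lattice into integers. -/
def half : (Fin 8 → ℤ) →+ (Fin 8 → ℝ) where
  toFun x i := x i / 2
  map_zero' := by ext; simp
  map_add' x y := by ext; simp [add_div]

/-- The doubled `E8` lattice `2Λ`, as a lattice of integer vectors. -/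
def doubledLattice : AddSubgroup (Fin 8 → ℤ) where
  carrier := {x | ((∀ i, Even (x i)) ∨ ∀ i, Odd (x i)) ∧ 4 ∣ ∑ i, x i}
  zero_mem' := by simp
  add_mem' {x y} hx hy := by
    refine ⟨?_, by simpa [Finset.sum_add_distrib] using dvd_add hx.2 hy.2⟩
    rcases hx.1 with hx | hx <;> rcases hy.1 with hy | hy
    · exact .inl fun i ↦ (hx i).add (hy i)
    · exact .inr fun i ↦ (hx i).add_odd (hy i)
    · exact .inr fun i ↦ (hx i).add_even (hy i)
    · exact .inl fun i ↦ (hx i).add_odd (hy i)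
  neg_mem' {x} hx := by simpa using hx

instance : DecidablePred (· ∈ doubledLattice) := fun x ↦
  inferInstanceAs (Decidable (((∀ i, Even (x i)) ∨ ∀ i, Odd (x i)) ∧ 4 ∣ ∑ i, x i))

lemma half_apply (x : Fin 8 → ℤ) (i : Fin 8) : half x i = x i / 2 := rfl

lemma half_injective : Function.Injective half := fun x y h ↦ by
  ext i
  simpa [half_apply] using congrFun h i

lemma half_dotProduct_half (x y : Fin 8 → ℤ) : half x ⬝ᵥ half y = (x ⬝ᵥ y : ℤ) / 4 := by
  simp only [dotProduct, Int.cast_sum, Int.cast_mul, Finset.sum_div]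
  exact Finset.sum_congr rfl fun i _ ↦ by rw [half_apply, half_apply]; ring

lemma half_dotProduct_half_eq_iff (x y : Fin 8 → ℤ) (k : ℤ) :
    half x ⬝ᵥ half y = k ↔ x ⬝ᵥ y = 4 * k := by
  rw [half_dotProduct_half, div_eq_iff four_ne_zero, mul_comm]
  norm_cast

lemma half_dotProduct_half_eq_zero_iff (x y : Fin 8 → ℤ) : half x ⬝ᵥ half y = 0 ↔ x ⬝ᵥ y = 0 := by
  simpa using half_dotProduct_half_eq_iff x y 0

lemma sum_half_eq_two_mul_iff (x : Fin 8 → ℤ) (n : ℤ) :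
    ∑ i, half x i = 2 * n ↔ ∑ i, x i = 4 * n := by
  simp only [half_apply, ← Finset.sum_div]
  rw [div_eq_iff two_ne_zero, show (2 * n * 2 : ℝ) = ((4 * n : ℤ) : ℝ) by push_cast; ring]
  norm_cast

lemma inLambda_half_iff (x : Fin 8 → ℤ) : inLambda (half x) ↔ x ∈ doubledLattice := by
  refine and_congr (or_congr (forall_congr' fun i ↦ exists_congr fun n ↦ ?_)
    (forall_congr' fun i ↦ exists_congr fun n ↦ ?_)) (exists_congr (sum_half_eq_two_mul_iff x))
  · rw [half_apply, div_eq_iff two_ne_zero, mul_two]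
    norm_cast
  · rw [half_apply, div_eq_iff two_ne_zero, show ((n + 1 / 2) * 2 : ℝ) = ((2 * n + 1 : ℤ) : ℝ) by
      push_cast; ring]
    norm_cast

lemma inLambda_iff_exists_half {a : Fin 8 → ℝ} :
    inLambda a ↔ ∃ x ∈ doubledLattice, half x = a := by
  refine ⟨fun ha ↦ ?_, fun ⟨x, hx, hxa⟩ ↦ hxa ▸ (inLambda_half_iff x).2 hx⟩
  obtain ⟨x, rfl⟩ : ∃ x, half x = a := by
    rcases ha.1 with h | h <;> choose f hf using h
    · exact ⟨fun i ↦ 2 * f i, funext fun i ↦ by simp [half_apply, hf i]⟩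
    · refine ⟨fun i ↦ 2 * f i + 1, funext fun i ↦ ?_⟩
      rw [half_apply, hf i]
      push_cast
      ring
  exact ⟨x, (inLambda_half_iff x).1 ha, rfl⟩

/-- The `E8` lattice `Λ` as a subgroup of `ℝ⁸`. -/
def lattice : AddSubgroup (Fin 8 → ℝ) :=
  (doubledLattice.map half).copy {a | inLambda a} (Set.ext fun _ ↦ inLambda_iff_exists_half)

lemma mem_lattice {a : Fin 8 → ℝ} : a ∈ lattice ↔ inLambda a := Iff.rfl

lemma eight_dvd_dotProduct_self {x : Fin 8 → ℤ} (hx : x ∈ doubledLattice) : 8 ∣ x ⬝ᵥ x := by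
  rcases hx.1 with hx_even | hx_odd
  · have dvd_term (i : Fin 8) : 8 ∣ x i * x i - 2 * x i := by
      obtain ⟨y, hy⟩ := hx_even i
      obtain ⟨z, hz⟩ := Int.even_mul_pred_self y
      exact ⟨z, by rw [hy]; linear_combination 4 * hz⟩
    have dvd_sum : 8 ∣ ∑ i, (x i * x i - 2 * x i) := Finset.dvd_sum fun i _ ↦ dvd_term i
    have := hx.2
    rw [Finset.sum_sub_distrib, ← Finset.mul_sum] at dvd_sum
    simp only [dotProduct]
    omega
  · have dvd_term (i : Fin 8) : 8 ∣ x i * x i - 1 := by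
      simpa [sq] using Int.eight_dvd_sq_sub_one_of_odd (hx_odd i)
    have dvd_sum : 8 ∣ ∑ i, (x i * x i - 1) := Finset.dvd_sum fun i _ ↦ dvd_term i
    simpa [dotProduct] using dvd_sum

lemma isEven_lattice : IsEven lattice := fun a ha ↦ by
  obtain ⟨x, hx, rfl⟩ := inLambda_iff_exists_half.1 ha
  obtain ⟨k, hk⟩ := eight_dvd_dotProduct_self hx
  refine ⟨k, ?_⟩
  rw [half_dotProduct_half, hk]
  push_cast
  ring

/-- The integer vectors of length `n` and squared norm `N` with entries in `S`. The recursion over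
the entries stops once `N` is exhausted, which keeps the enumeration small enough for `decide`. -/
def sphere (S : Finset ℤ) : (n : ℕ) → (N : ℤ) → Finset (Fin n → ℤ)
  | 0, N => if N = 0 then {![]} else ∅
  | n + 1, N => if N < 0 then ∅ else
      S.disjiUnion
        (fun a ↦ (sphere S n (N - a * a)).map
          ⟨vecCons a, Fin.cons_right_injective (α := fun _ ↦ ℤ) a⟩)
        fun a _ b _ hab ↦ Finset.disjoint_left.2 fun x hxa hxb ↦ by
          obtain ⟨y, -, rfl⟩ := Finset.mem_map.1 hxa
          obtain ⟨z, -, hz⟩ := Finset.mem_map.1 hxb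
          exact hab (congrFun hz 0).symm

lemma mem_sphere {S : Finset ℤ} {n : ℕ} {N : ℤ} {x : Fin n → ℤ} :
    x ∈ sphere S n N ↔ (∀ i, x i ∈ S) ∧ x ⬝ᵥ x = N := by
  induction n generalizing N with
  | zero => by_cases hN : N = 0 <;> simp [sphere, Subsingleton.elim x ![], hN, eq_comm]
  | succ n ih =>
    obtain ⟨a, y, rfl⟩ : ∃ a y, x = vecCons a y := ⟨_, _, (cons_head_tail x).symm⟩
    have vecCons_mem : vecCons a y ∈ sphere S (n + 1) N ↔
        0 ≤ N ∧ a ∈ S ∧ y ∈ sphere S n (N - a * a) := by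
      rw [sphere]
      split_ifs with hN
      · simp [hN.not_ge]
      · refine Finset.mem_disjiUnion.trans ⟨?_, ?_⟩
        · rintro ⟨b, hb, hby⟩
          obtain ⟨z, hz, hzy⟩ := Finset.mem_map.1 hby
          obtain ⟨rfl, rfl⟩ := vecCons_inj.1 hzy
          exact ⟨not_lt.1 hN, hb, hz⟩
        · rintro ⟨-, ha, hy⟩
          exact ⟨a, ha, Finset.mem_map_of_mem _ hy⟩
    have norm_nonneg : 0 ≤ y ⬝ᵥ y := Finset.sum_nonneg fun i _ ↦ mul_self_nonneg _
    simp only [vecCons_mem, ih, Fin.forall_fin_succ, cons_val_zero, cons_val_succ,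
      cons_dotProduct_cons, and_assoc]
    constructor
    · rintro ⟨-, ha, hy, h⟩
      exact ⟨ha, hy, by omega⟩
    · rintro ⟨ha, hy, h⟩
      exact ⟨by nlinarith [mul_self_nonneg a], ha, hy, by omega⟩

/-- The roots of `E8`, in doubled coordinates. -/
def doubledRoots : Finset (Fin 8 → ℤ) :=
  {x ∈ sphere {-2, 0, 2} 8 8 ∪ sphere {-1, 1} 8 8 | 4 ∣ ∑ i, x i}

lemma mem_doubledRoots {x : Fin 8 → ℤ} :
    x ∈ doubledRoots ↔ x ∈ doubledLattice ∧ x ⬝ᵥ x = 8 := by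
  have mem_iff_even (a : ℤ) (h : a * a ≤ 8) : a ∈ ({-2, 0, 2} : Finset ℤ) ↔ Even a := by
    have : a ≤ 2 := by nlinarith
    have : -2 ≤ a := by nlinarith
    interval_cases a <;> decide
  have mem_iff_odd (a : ℤ) (h : a * a ≤ 8) : a ∈ ({-1, 1} : Finset ℤ) ↔ Odd a := by
    have : a ≤ 2 := by nlinarith
    have : -2 ≤ a := by nlinarith
    interval_cases a <;> decide
  simp only [doubledRoots, Finset.mem_filter, Finset.mem_union, mem_sphere, ← or_and_right]
  rw [and_right_comm]
  refine and_congr_left fun hx ↦ and_congr_left fun _ ↦ ?_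
  have entry_sq_le (i : Fin 8) : x i * x i ≤ 8 :=
    hx ▸ Finset.single_le_sum (f := fun i ↦ x i * x i) (fun i _ ↦ mul_self_nonneg _)
      (Finset.mem_univ i)
  exact or_congr (forall_congr' fun i ↦ mem_iff_even _ (entry_sq_le i))
    (forall_congr' fun i ↦ mem_iff_odd _ (entry_sq_le i))

variable {m : ℕ} {e f : Fin m → Fin 8 → ℝ}

/-- The `E8` roots orthogonal to every member of the family `c`, all in doubled coordinates. -/
def doubledRootsOrth (c : Fin m → Fin 8 → ℤ) : Finset (Fin 8 → ℤ) :=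
  {x ∈ doubledRoots | ∀ i, x ⬝ᵥ c i = 0}

lemma mem_doubledRootsOrth {c : Fin m → Fin 8 → ℤ} {x : Fin 8 → ℤ} :
    x ∈ doubledRootsOrth c ↔ (x ∈ doubledLattice ∧ x ⬝ᵥ x = 8) ∧ ∀ i, x ⬝ᵥ c i = 0 := by
  rw [doubledRootsOrth, Finset.mem_filter, mem_doubledRoots]

lemma half_mem_rootsOrth_iff {c : Fin m → Fin 8 → ℤ} {x : Fin 8 → ℤ} :
    half x ∈ rootsOrth lattice (fun i ↦ half (c i)) ↔ x ∈ doubledRootsOrth c := by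
  have norm_iff : half x ⬝ᵥ half x = 2 ↔ x ⬝ᵥ x = 8 := half_dotProduct_half_eq_iff x x 2
  simp only [rootsOrth, Set.mem_ofPred_eq, mem_doubledRootsOrth, mem_lattice, inLambda_half_iff,
    norm_iff, half_dotProduct_half_eq_zero_iff]

lemma rootsOrth_half (c : Fin m → Fin 8 → ℤ) :
    rootsOrth lattice (fun i ↦ half (c i)) = half '' doubledRootsOrth c := by
  ext e
  refine ⟨fun he ↦ ?_, ?_⟩
  · obtain ⟨x, -, rfl⟩ := inLambda_iff_exists_half.1 he.1.1
    exact ⟨x, half_mem_rootsOrth_iff.1 he, rfl⟩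
  · rintro ⟨x, hx, rfl⟩
    exact half_mem_rootsOrth_iff.2 hx

/-- A reference triple of orthogonal `E8` roots in doubled coordinates, to which all such triples
are conjugate. The roots orthogonal to its initial segments form systems of type `E8`, `E7`, `D6`
and `D4 + A1`. -/
def doubledFrame : Fin 3 → Fin 8 → ℤ :=
  ![![2, 2, 0, 0, 0, 0, 0, 0], ![2, -2, 0, 0, 0, 0, 0, 0], ![0, 0, 2, 2, 0, 0, 0, 0]]

set_option maxRecDepth 100000 in
lemma card_doubledRootsOrth_take_doubledFrame (k : Fin 4) :
    (doubledRootsOrth (Fin.take k k.is_le doubledFrame)).card = ![240, 126, 60, 26] k := by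
  decide +kernel +revert

lemma doubledFrame_mem (k : Fin 3) :
    doubledFrame k ∈ doubledRootsOrth (Fin.take k k.is_le' doubledFrame) :=
  mem_doubledRootsOrth.2 (by decide +kernel +revert)

set_option maxRecDepth 100000 in
lemma exists_common_neighbor (k : Fin 3) :
    ∀ x ∈ doubledRootsOrth (Fin.take k k.is_le' doubledFrame),
      ∃ y ∈ doubledRootsOrth (Fin.take k k.is_le' doubledFrame),
        x ⬝ᵥ y ≠ 0 ∧ doubledFrame k ⬝ᵥ y ≠ 0 := by
  decide +kernel +revert

lemma exists_aut_map_eq_half_doubledFrame (hm : m ≤ 3) (he : IsRootFrame lattice e) :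
    ∃ w ∈ aut lattice, ∀ i, w (e i) = half (Fin.take m hm doubledFrame i) := by
  refine exists_aut_map_frame_eq (c := fun i ↦ half (doubledFrame i)) (fun k f hf ↦ ?_) hm he
  obtain ⟨x, hx, rfl⟩ := (rootsOrth_half _).subset hf
  obtain ⟨y, hy, hxy, hky⟩ := exists_common_neighbor k x hx
  refine isEven_lattice.exists_autFixing_map_eq_of_common_neighbor hf
    (half_mem_rootsOrth_iff.2 (doubledFrame_mem k)) ⟨half y, half_mem_rootsOrth_iff.2 hy, ?_⟩
  simp only [ne_eq, half_dotProduct_half_eq_zero_iff]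
  exact ⟨hxy, hky⟩

lemma exists_aut_map_eq (hm : m ≤ 3) (he : IsRootFrame lattice e) (hf : IsRootFrame lattice f) :
    ∃ w ∈ aut lattice, ∀ i, w (e i) = f i := by
  obtain ⟨v, hv, hve⟩ := exists_aut_map_eq_half_doubledFrame hm he
  obtain ⟨w, hw, hwf⟩ := exists_aut_map_eq_half_doubledFrame hm hf
  exact ⟨w⁻¹ * v, mul_mem (inv_mem hw) hv, fun i ↦ by simp [hve, ← hwf, -Fin.take_apply]⟩

lemma ncard_rootsOrth (k : Fin 4) {e : Fin k → Fin 8 → ℝ} (he : IsRootFrame lattice e) :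
    (rootsOrth lattice e).ncard = ![240, 126, 60, 26] k := by
  obtain ⟨w, hw, hwe⟩ := exists_aut_map_eq_half_doubledFrame k.is_le he
  rw [← ncard_rootsOrth_map hw, funext hwe, rootsOrth_half,
    Set.ncard_image_of_injective _ half_injective, Set.ncard_coe_finset,
    card_doubledRootsOrth_take_doubledFrame]

lemma finite_roots : {a | a ∈ lattice ∧ a ⬝ᵥ a = 2}.Finite := by
  have roots_eq : rootsOrth lattice (fun i : Fin 0 ↦ half (![] i)) =
      {a | a ∈ lattice ∧ a ⬝ᵥ a = 2} := by simp [rootsOrth]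
  rw [← roots_eq, rootsOrth_half]
  exact (Finset.finite_toSet _).image _

lemma ncard_setOf_isRootFrame_three :
    {e : Fin 3 → Fin 8 → ℝ | IsRootFrame lattice e}.ncard = 1814400 := by
  rw [ncard_setOf_isRootFrame (k := ![240, 126, 60]) finite_roots fun m e he ↦ ?_]
  · simp [Fin.prod_univ_three]
  · rw [ncard_rootsOrth m.castSucc he]
    fin_cases m <;> rfl

lemma nonempty_halvingRoots {e : Fin 3 → Fin 8 → ℝ} (he : IsRootFrame lattice e) :
    (halvingRoots lattice e).Nonempty := by
  obtain ⟨w, hw, hwe⟩ := exists_aut_map_eq_half_doubledFrame le_rfl he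
  let u : Fin 8 → ℤ := ![0, 0, 2, -2, 0, 0, 0, 0]
  let x : Fin 8 → ℤ := ![2, 0, 2, 0, 0, 0, 0, 0]
  have hu : u ∈ doubledRootsOrth doubledFrame := mem_doubledRootsOrth.2 (by decide +kernel)
  have hx : x ∈ doubledLattice := by decide +kernel
  have sum_eq : ∑ i, half (doubledFrame i) + half u = (2 : ℝ) • half x := by
    rw [two_smul, ← map_sum, ← map_add, ← map_add]
    exact congrArg half (by decide)
  have mem : half u ∈ halvingRoots lattice (fun i ↦ w (e i)) := by
    rw [funext hwe]
    exact ⟨half_mem_rootsOrth_iff.2 hu, half x, (inLambda_half_iff x).2 hx, sum_eq⟩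
  obtain ⟨v, hv⟩ := w.surjective (half u)
  exact ⟨v, (map_mem_halvingRoots_iff hw).1 (hv ▸ mem)⟩

lemma exists_halvingRoots_eq_pair {e : Fin 3 → Fin 8 → ℝ} (he : IsRootFrame lattice e) :
    ∃ u, u ≠ -u ∧ halvingRoots lattice e = {u, -u} := by
  obtain ⟨u, hu⟩ := nonempty_halvingRoots he
  refine ⟨u, fun h ↦ ?_, isEven_lattice.halvingRoots_eq_pair hu⟩
  have norm_eq := hu.1.1.2
  rw [self_eq_neg.1 h, dotProduct_zero] at norm_eq
  exact two_ne_zero norm_eq.symm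

lemma isWeyl_of_mem_aut {w : (Fin 8 → ℝ) ≃ₗ[ℝ] (Fin 8 → ℝ)} (hw : w ∈ aut lattice) :
    IsWeyl w := by
  refine ⟨hw.1, ?_⟩
  have preimage_eq : w ⁻¹' {a | isRoot a} = {a | isRoot a} :=
    Set.ext fun a ↦ and_congr (hw.2 a) (Eq.congr_left (hw.1 a a))
  conv_lhs => rw [← preimage_eq, Set.image_preimage_eq _ w.surjective]

variable {a b c x : Fin 8 → ℝ}

lemma dot_eq_dotProduct (a b : Fin 8 → ℝ) : dot a b = a ⬝ᵥ b := rfl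

lemma isRootFrame_triple_iff :
    IsRootFrame lattice ![a, b, c] ↔
      isRoot a ∧ isRoot b ∧ isRoot c ∧ dot a b = 0 ∧ dot a c = 0 ∧ dot b c = 0 := by
  simp [IsRootFrame, Fin.forall_fin_succ, isRoot, dot_eq_dotProduct, mem_lattice, and_assoc]

lemma ncard_setOf_isRootFrame_triple :
    {v : (Fin 8 → ℝ) × (Fin 8 → ℝ) × (Fin 8 → ℝ) |
      IsRootFrame lattice ![v.1, v.2.1, v.2.2]}.ncard = 1814400 := by
  let tripleEquiv : (Fin 8 → ℝ) × (Fin 8 → ℝ) × (Fin 8 → ℝ) ≃ (Fin 3 → Fin 8 → ℝ) :=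
    { toFun v := ![v.1, v.2.1, v.2.2]
      invFun e := (e 0, e 1, e 2)
      left_inv _ := rfl
      right_inv e := by ext i; fin_cases i <;> rfl }
  have preimage_eq : {v : (Fin 8 → ℝ) × (Fin 8 → ℝ) × (Fin 8 → ℝ) |
      IsRootFrame lattice ![v.1, v.2.1, v.2.2]} = tripleEquiv ⁻¹' {e | IsRootFrame lattice e} := rfl
  rw [preimage_eq, Set.ncard_preimage_of_injective_subset_range tripleEquiv.injective (by simp),
    ncard_setOf_isRootFrame_three]

lemma mem_rootsOrth_triple_iff :
    x ∈ rootsOrth lattice ![a, b, c] ↔ isRoot x ∧ dot x a = 0 ∧ dot x b = 0 ∧ dot x c = 0 := by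
  simp [rootsOrth, Fin.forall_fin_succ, isRoot, dot_eq_dotProduct, mem_lattice]

lemma mem_halvingRoots_triple_iff :
    x ∈ halvingRoots lattice ![a, b, c] ↔ isRoot x ∧ dot x a = 0 ∧ dot x b = 0 ∧ dot x c = 0 ∧
      ∃ y, inLambda y ∧ a + b + c + x = (2 : ℝ) • y := by
  simp [halvingRoots, mem_rootsOrth_triple_iff, Fin.sum_univ_three, and_assoc, mem_lattice]

end E8

/-- The set `V₃` of triples of pairwise orthogonal roots has exactly
1814400 elements and the Weyl group acts transitively on it. For every such triple
`(e1,e2,e3)` there are exactly 26 roots orthogonal to all three; exactly two of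
these, say `u` and `u'`, satisfy `e1+e2+e3+u ∈ 2Λ`, and they are negatives of each
other. -/
theorem stmt_9 :
    {v : (Fin 8 → ℝ) × (Fin 8 → ℝ) × (Fin 8 → ℝ) |
      isRoot v.1 ∧ isRoot v.2.1 ∧ isRoot v.2.2 ∧
      dot v.1 v.2.1 = 0 ∧ dot v.1 v.2.2 = 0 ∧ dot v.2.1 v.2.2 = 0}.ncard = 1814400 ∧
    (∀ e1 e2 e3 f1 f2 f3 : Fin 8 → ℝ,
      isRoot e1 → isRoot e2 → isRoot e3 → isRoot f1 → isRoot f2 → isRoot f3 →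
      dot e1 e2 = 0 → dot e1 e3 = 0 → dot e2 e3 = 0 →
      dot f1 f2 = 0 → dot f1 f3 = 0 → dot f2 f3 = 0 →
      ∃ w : (Fin 8 → ℝ) ≃ₗ[ℝ] (Fin 8 → ℝ),
        IsWeyl w ∧ w e1 = f1 ∧ w e2 = f2 ∧ w e3 = f3) ∧
    (∀ e1 e2 e3 : Fin 8 → ℝ, isRoot e1 → isRoot e2 → isRoot e3 →
      dot e1 e2 = 0 → dot e1 e3 = 0 → dot e2 e3 = 0 →
      {e | isRoot e ∧ dot e e1 = 0 ∧ dot e e2 = 0 ∧ dot e e3 = 0}.ncard = 26 ∧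
      {e | isRoot e ∧ dot e e1 = 0 ∧ dot e e2 = 0 ∧ dot e e3 = 0 ∧
        ∃ x, inLambda x ∧ e1 + e2 + e3 + e = (2 : ℝ) • x}.ncard = 2 ∧
      (∀ u u' : Fin 8 → ℝ,
        (isRoot u ∧ dot u e1 = 0 ∧ dot u e2 = 0 ∧ dot u e3 = 0 ∧
          ∃ x, inLambda x ∧ e1 + e2 + e3 + u = (2 : ℝ) • x) →
        (isRoot u' ∧ dot u' e1 = 0 ∧ dot u' e2 = 0 ∧ dot u' e3 = 0 ∧
          ∃ x, inLambda x ∧ e1 + e2 + e3 + u' = (2 : ℝ) • x) →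
        u ≠ u' → u' = -u)) := by
  simp only [← E8.isRootFrame_triple_iff, ← E8.mem_rootsOrth_triple_iff,
    ← E8.mem_halvingRoots_triple_iff]
  refine ⟨E8.ncard_setOf_isRootFrame_triple, ?_, ?_⟩
  · intro e1 e2 e3 f1 f2 f3 he1 he2 he3 hf1 hf2 hf3 he12 he13 he23 hf12 hf13 hf23
    obtain ⟨w, hw, hwe⟩ := E8.exists_aut_map_eq le_rfl
      (E8.isRootFrame_triple_iff.2 ⟨he1, he2, he3, he12, he13, he23⟩)
      (E8.isRootFrame_triple_iff.2 ⟨hf1, hf2, hf3, hf12, hf13, hf23⟩)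
    exact ⟨w, E8.isWeyl_of_mem_aut hw, hwe 0, hwe 1, hwe 2⟩
  · intro e1 e2 e3 he1 he2 he3 he12 he13 he23
    have he := E8.isRootFrame_triple_iff.2 ⟨he1, he2, he3, he12, he13, he23⟩
    obtain ⟨u, hu_ne, hu⟩ := E8.exists_halvingRoots_eq_pair he
    simp only [Set.ofPred_mem_eq, hu]
    refine ⟨E8.ncard_rootsOrth 3 he, Set.ncard_pair hu_ne, ?_⟩
    rintro _ _ (rfl | rfl) (rfl | rfl) hne <;> simp_all
end
end

section
/- Let V₄ = {(e1,e2,e3,e4) ∈ E⁴ : e_i·e_j = 0 for all i ≠ j}. Then V₄ is the disjoint union of exactly two orbits under the action of the Weyl group W: the set O = {(e1,e2,e3,e4) ∈ V₄ : e1+e2+e3+e4 ∈ 2Λ}, which has exactly 3628800 elements, and its complement Y = V₄ \ O, which has exactly 43545600 elements. -/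
noncomputable section

/-!
Reflections in roots orthogonal to a tuple `u` fix `u`, and they conjugate any two non-orthogonal
roots that are orthogonal to `u`. Extending tuples of orthogonal roots one entry at a time, the
stabilizer of the earlier entries acts transitively on the 240, 126 and 60 roots of E8, E7 and D6
available as the first, second and third entry. The roots orthogonal to an orthogonal triple form
A1 ⊔ D4. If `±k` are the two roots of A1, then `k` completes the triple to an element of `O`, and
the parity of `k ⬝ᵥ y` shows that `±k` are the only such roots; the 24 roots of D4 all lead to `Y`.
The stabilizer of the triple is transitive on both parts, whence the two orbits, of sizes
`240 * 126 * 60 * 2` and `240 * 126 * 60 * 24`.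
-/

open Matrix MulAction Pointwise

local notation "ℝ⁸" => Fin 8 → ℝ
local notation "ℤ⁸" => Fin 8 → ℤ

section Orbits

variable {G α : Type*} [Group G] [MulAction G α] {n : ℕ}

lemma stabilizer_vecCons (x : α) (u : Fin n → α) :
    stabilizer G (vecCons x u) = stabilizer G x ⊓ stabilizer G u := by
  ext g
  simp [mem_stabilizer_iff, funext_iff, Fin.forall_fin_succ]

lemma ncard_orbit_vecCons (x : α) (u : Fin n → α) :
    (orbit G (vecCons x u)).ncard = (orbit G u).ncard * (orbit (stabilizer G u) x).ncard := by
  have h : stabilizer (stabilizer G u) x = (stabilizer G x).subgroupOf (stabilizer G u) := rfl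
  rw [← index_stabilizer, ← index_stabilizer, ← index_stabilizer, h, stabilizer_vecCons,
    ← Subgroup.relIndex_mul_index inf_le_right, Subgroup.inf_relIndex_right, mul_comm]
  rfl

lemma eq_orbit_vecCons {B : Set (Fin (n + 1) → α)} {u : Fin n → α} {x : α}
    (smul_mem : ∀ (g : G), ∀ v ∈ B, g • v ∈ B) (tail_mem : ∀ v ∈ B, vecTail v ∈ orbit G u)
    (fiber_eq : {y | vecCons y u ∈ B} = orbit (stabilizer G u) x) :
    B = orbit G (vecCons x u) := by
  have fiber_iff (y : α) : vecCons y u ∈ B ↔ y ∈ orbit (stabilizer G u) x := by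
    rw [← fiber_eq, Set.mem_ofPred_eq]
  refine Set.Subset.antisymm (fun v hv => ?_) ?_
  · obtain ⟨g, hg⟩ := tail_mem v hv
    have hgv : g⁻¹ • v = vecCons (g⁻¹ • vecHead v) u := by
      rw [← cons_head_tail v, smul_cons, ← hg]
      simp
    obtain ⟨h, hh⟩ := (fiber_iff _).1 (hgv ▸ smul_mem g⁻¹ v hv)
    refine ⟨g * h, ?_⟩
    have hu : (h : G) • u = u := h.2
    have hx : (h : G) • x = g⁻¹ • vecHead v := hh
    simp only [mul_smul, smul_cons, hu, hx, ← hgv, smul_inv_smul]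
  · rintro _ ⟨g, rfl⟩
    exact smul_mem g _ ((fiber_iff x).2 (mem_orbit_self x))

end Orbits

section Lattice

/-- The point of `ℝ⁸` with doubled coordinates `n`: doubling makes every vector of the E8 lattice
integral. -/
def halve (n : ℤ⁸) : ℝ⁸ := fun i => (n i : ℝ) / 2

lemma halve_injective : Function.Injective halve := fun m n h => funext fun i => by
  simpa [halve, div_left_inj'] using congrFun h i

lemma halve_add (m n : ℤ⁸) : halve (m + n) = halve m + halve n :=
  funext fun i => by simp [halve, add_div]

lemma halve_neg (n : ℤ⁸) : halve (-n) = -halve n :=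
  funext fun i => by simp [halve, neg_div]

lemma halve_dotProduct_halve (m n : ℤ⁸) : halve m ⬝ᵥ halve n = ((m ⬝ᵥ n : ℤ) : ℝ) / 4 := by
  simp only [halve, dotProduct, Int.cast_sum, Int.cast_mul, Finset.sum_div]
  exact Finset.sum_congr rfl fun i _ => by ring

lemma exists_halve_eq {a : ℝ⁸} (ha : inLambda a) : ∃ n, halve n = a := by
  rcases ha.1 with h | h <;> choose n hn using h
  · exact ⟨fun i => 2 * n i, funext fun i => by simp [halve, hn]⟩
  · exact ⟨fun i => 2 * n i + 1, funext fun i => by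
      simp only [halve, hn]
      push_cast
      ring⟩

lemma halve_single (i : Fin 8) (m : ℤ) : halve (Pi.single i m) = Pi.single i ((m : ℝ) / 2) :=
  funext fun j => by obtain rfl | h := eq_or_ne j i <;> simp [halve, *]

/-- Membership of `halve n` in the E8 lattice, read off the doubled coordinates: they all have the
same parity and their sum is divisible by 4. -/
abbrev IsDoubledLattice (n : ℤ⁸) : Prop := 4 ∣ ∑ i, n i ∧ ∀ i, n i ≡ n 0 [ZMOD 2]

lemma half_eq_intCast_iff {m : ℤ} : (∃ z : ℤ, (m : ℝ) / 2 = z) ↔ m ≡ 0 [ZMOD 2] := by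
  rw [Int.modEq_zero_iff_dvd]
  refine exists_congr fun z => ?_
  rw [div_eq_iff two_ne_zero, mul_comm]
  exact_mod_cast Iff.rfl

lemma half_eq_intCast_add_half_iff {m : ℤ} :
    (∃ z : ℤ, (m : ℝ) / 2 = z + 1 / 2) ↔ m ≡ 1 [ZMOD 2] := by
  rw [Int.modEq_comm, Int.modEq_iff_dvd]
  refine exists_congr fun z => ?_
  rw [div_eq_iff two_ne_zero, add_mul, div_mul_cancel₀ _ two_ne_zero, sub_eq_iff_eq_add, mul_comm]
  exact_mod_cast Iff.rfl

lemma inLambda_halve_iff {n : ℤ⁸} : inLambda (halve n) ↔ IsDoubledLattice n := by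
  have sum_iff : (∃ z : ℤ, ∑ i, halve n i = 2 * z) ↔ 4 ∣ ∑ i, n i := by
    refine exists_congr fun z => ?_
    have : ∑ i, halve n i = ((∑ i, n i : ℤ) : ℝ) / 2 := by simp [halve, Finset.sum_div]
    rw [this, div_eq_iff two_ne_zero, show (2 * z * 2 : ℝ) = ((4 * z : ℤ) : ℝ) by push_cast; ring]
    exact_mod_cast Iff.rfl
  rw [inLambda, sum_iff, and_comm]
  simp only [halve, half_eq_intCast_iff, half_eq_intCast_add_half_iff]
  refine and_congr_right fun _ => ⟨?_, fun h => ?_⟩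
  · rintro (h | h) <;> exact fun i => (h i).trans (h 0).symm
  · exact (Int.emod_two_eq_zero_or_one (n 0)).imp (fun h₀ i => (h i).trans h₀)
      (fun h₁ i => (h i).trans h₁)

/-- The E8 lattice Λ. -/
def e8Lattice : AddSubgroup ℝ⁸ where
  carrier := {a | inLambda a}
  zero_mem' := by
    rw [Set.mem_ofPred_eq, show (0 : ℝ⁸) = halve 0 by ext; simp [halve], inLambda_halve_iff]
    decide
  add_mem' {a b} ha hb := by
    obtain ⟨m, rfl⟩ := exists_halve_eq ha
    obtain ⟨n, rfl⟩ := exists_halve_eq hb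
    rw [Set.mem_ofPred_eq, inLambda_halve_iff] at ha hb
    rw [Set.mem_ofPred_eq, ← halve_add, inLambda_halve_iff]
    refine ⟨?_, fun i => (ha.2 i).add (hb.2 i)⟩
    simpa only [Pi.add_apply, Finset.sum_add_distrib] using dvd_add ha.1 hb.1
  neg_mem' {a} ha := by
    obtain ⟨n, rfl⟩ := exists_halve_eq ha
    rw [Set.mem_ofPred_eq, inLambda_halve_iff] at ha
    rw [Set.mem_ofPred_eq, ← halve_neg, inLambda_halve_iff]
    exact ⟨by simpa using ha.1, fun i => (ha.2 i).neg⟩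

lemma mem_e8Lattice {a : ℝ⁸} : a ∈ e8Lattice ↔ inLambda a := Iff.rfl

lemma mem_two_smul_e8Lattice {s : ℝ⁸} :
    s ∈ (2 : ℝ) • e8Lattice ↔ ∃ x, inLambda x ∧ s = (2 : ℝ) • x := by
  simp only [AddSubgroup.mem_smul_pointwise_iff_exists, mem_e8Lattice, eq_comm]

lemma four_dvd_dotProduct {m n : ℤ⁸} (hm : IsDoubledLattice m) (hn : IsDoubledLattice n) :
    4 ∣ m ⬝ᵥ n := by
  choose p hp using fun i => (hm.2 i).symm.dvd
  choose q hq using fun i => (hn.2 i).symm.dvd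
  have term_eq (i : Fin 8) : m i * n i =
      n 0 * m i + m 0 * n i - m 0 * n 0 + 4 * (p i * q i) := by
    linear_combination (n i - n 0) * hp i + 2 * p i * hq i
  have sum_eq : m ⬝ᵥ n =
      n 0 * ∑ i, m i + m 0 * ∑ i, n i - 8 * (m 0 * n 0) + 4 * ∑ i, p i * q i :=
    calc m ⬝ᵥ n = ∑ i, (n 0 * m i + m 0 * n i - m 0 * n 0 + 4 * (p i * q i)) :=
          Finset.sum_congr rfl fun i _ => term_eq i
      _ = _ := by simp [Finset.sum_add_distrib, Finset.sum_sub_distrib, Finset.mul_sum]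
  obtain ⟨s, hs⟩ := hm.1
  obtain ⟨t, ht⟩ := hn.1
  rw [sum_eq, hs, ht]
  exact ⟨n 0 * s + m 0 * t - 2 * (m 0 * n 0) + ∑ i, p i * q i, by ring⟩

lemma eight_dvd_dotProduct_self {n : ℤ⁸} (hn : IsDoubledLattice n) : 8 ∣ n ⬝ᵥ n := by
  have term_dvd (i : Fin 8) : 8 ∣ (n i - n 0) * (n i - n 0) - 2 * (n i - n 0) := by
    obtain ⟨p, hp⟩ := (hn.2 i).symm.dvd
    obtain ⟨t, ht⟩ := even_iff_two_dvd.1 (Int.even_mul_pred_self p)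
    exact ⟨t, by rw [hp]; linear_combination 4 * ht⟩
  have sum_eq : n ⬝ᵥ n = ∑ i, ((n i - n 0) * (n i - n 0) - 2 * (n i - n 0)) +
      2 * (n 0 + 1) * ∑ i, n i - 8 * (n 0 * n 0 + 2 * n 0) := by
    simp only [dotProduct, Fin.sum_univ_eight]
    ring
  obtain ⟨s, hs⟩ := hn.1
  obtain ⟨t, ht⟩ := Finset.dvd_sum fun i _ => term_dvd i
  rw [sum_eq, ht, hs]
  exact ⟨t + (n 0 + 1) * s - (n 0 * n 0 + 2 * n 0), by ring⟩

lemma exists_dotProduct_eq_intCast {a b : ℝ⁸} (ha : a ∈ e8Lattice) (hb : b ∈ e8Lattice) :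
    ∃ z : ℤ, a ⬝ᵥ b = z := by
  obtain ⟨m, rfl⟩ := exists_halve_eq ha
  obtain ⟨n, rfl⟩ := exists_halve_eq hb
  obtain ⟨z, hz⟩ := four_dvd_dotProduct (inLambda_halve_iff.1 ha) (inLambda_halve_iff.1 hb)
  exact ⟨z, by rw [halve_dotProduct_halve, hz]; push_cast; ring⟩

lemma exists_dotProduct_self_eq_two_mul {a : ℝ⁸} (ha : a ∈ e8Lattice) :
    ∃ z : ℤ, a ⬝ᵥ a = 2 * z := by
  obtain ⟨n, rfl⟩ := exists_halve_eq ha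
  obtain ⟨z, hz⟩ := eight_dvd_dotProduct_self (inLambda_halve_iff.1 ha)
  exact ⟨z, by rw [halve_dotProduct_halve, hz]; push_cast; ring⟩

/-- `halve n` is a root, read off the doubled coordinates. -/
abbrev IsDoubledRoot (n : ℤ⁸) : Prop := n ⬝ᵥ n = 8 ∧ IsDoubledLattice n

lemma isRoot_halve_iff {n : ℤ⁸} : isRoot (halve n) ↔ IsDoubledRoot n := by
  have norm_iff : halve n ⬝ᵥ halve n = 2 ↔ n ⬝ᵥ n = 8 := by
    rw [halve_dotProduct_halve, div_eq_iff four_ne_zero,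
      show (2 * 4 : ℝ) = ((8 : ℤ) : ℝ) by norm_num, Int.cast_inj]
  rw [isRoot, inLambda_halve_iff, and_comm]
  exact and_congr_left fun _ => norm_iff

lemma isRoot.dotProduct_self {a : ℝ⁸} (ha : isRoot a) : a ⬝ᵥ a = 2 := ha.2

lemma isRoot.neg {a : ℝ⁸} (ha : isRoot a) : isRoot (-a) :=
  ⟨e8Lattice.neg_mem ha.1, (neg_dotProduct_neg a a).trans ha.2⟩

lemma mem_e8Lattice_iff_forall_isRoot {a : ℝ⁸} :
    a ∈ e8Lattice ↔ ∀ r, isRoot r → ∃ z : ℤ, a ⬝ᵥ r = z := by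
  refine ⟨fun ha r hr => exists_dotProduct_eq_intCast ha hr.1, fun h => ?_⟩
  have add_int (i : Fin 8) (hi : i ≠ 0) : ∃ z : ℤ, a 0 + a i = z := by
    have hr : ∀ i : Fin 8, i ≠ 0 → IsDoubledRoot (Pi.single 0 2 + Pi.single i 2) := by decide
    simpa [halve_add, halve_single] using h _ (isRoot_halve_iff.2 (hr i hi))
  have sub_int (i : Fin 8) (hi : i ≠ 0) : ∃ z : ℤ, a 0 - a i = z := by
    have hr : ∀ i : Fin 8, i ≠ 0 → IsDoubledRoot (Pi.single 0 2 - Pi.single i 2) := by decide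
    simpa [halve_add, halve_neg, sub_eq_add_neg, halve_single] using
      h _ (isRoot_halve_iff.2 (hr i hi))
  have sub_zero_int (i : Fin 8) : ∃ z : ℤ, a i - a 0 = z := by
    obtain rfl | hi := eq_or_ne i 0
    · exact ⟨0, by simp⟩
    · obtain ⟨z, hz⟩ := sub_int i hi
      exact ⟨-z, by push_cast; linarith⟩
  obtain ⟨k, hk⟩ : ∃ k : ℤ, 2 * a 0 = k := by
    obtain ⟨y, hy⟩ := add_int 1 (by decide)
    obtain ⟨z, hz⟩ := sub_int 1 (by decide)
    exact ⟨y + z, by push_cast; linarith⟩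
  choose d hd using sub_zero_int
  have ha : halve (fun i => k + 2 * d i) = a := funext fun i => by
    simp only [halve, Int.cast_add, Int.cast_mul, Int.cast_ofNat, ← hd, ← hk]
    ring
  have d_zero : d 0 = 0 := by exact_mod_cast (hd 0).symm.trans (sub_self _)
  obtain ⟨z, hz⟩ := h _ (isRoot_halve_iff.2 (show IsDoubledRoot 1 by decide))
  rw [← ha, halve_dotProduct_halve, div_eq_iff four_ne_zero, dotProduct_one] at hz
  rw [← ha, mem_e8Lattice, inLambda_halve_iff]
  exact ⟨⟨z, by rw [mul_comm]; exact_mod_cast hz⟩, fun i =>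
    Int.modEq_iff_dvd.2 ⟨-d i, by simp only [d_zero]; ring⟩⟩

end Lattice

section WeylGroup

/-- The Weyl group W, as a group of linear automorphisms of `ℝ⁸`. -/
def weylGroup : Subgroup (ℝ⁸ ≃ₗ[ℝ] ℝ⁸) where
  carrier := {w | IsWeyl w}
  one_mem' := ⟨fun _ _ => rfl, Set.image_id _⟩
  mul_mem' {v w} hv hw :=
    ⟨fun a b => (hv.1 _ _).trans (hw.1 a b),
      (Set.image_comp v w _).trans (by rw [hw.2, hv.2])⟩
  inv_mem' {w} hw :=
    ⟨fun a b => by rw [← hw.1]; simp, by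
      nth_rw 1 [← hw.2]
      rw [← Set.image_comp]
      simp⟩

variable (w : weylGroup)

lemma smul_dotProduct_smul_of_weylGroup (a b : ℝ⁸) : (w • a) ⬝ᵥ (w • b) = a ⬝ᵥ b := w.2.1 a b

lemma isRoot_smul_iff {a : ℝ⁸} : isRoot (w • a) ↔ isRoot a := by
  have : w • a ∈ (fun x => w • x) '' {r | isRoot r} ↔ a ∈ {r | isRoot r} :=
    (MulAction.injective w).mem_set_image
  rwa [show (fun x => w • x) '' {r | isRoot r} = {r | isRoot r} from w.2.2] at this

lemma smul_mem_e8Lattice {a : ℝ⁸} (ha : a ∈ e8Lattice) : w • a ∈ e8Lattice := by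
  rw [mem_e8Lattice_iff_forall_isRoot] at ha ⊢
  intro r hr
  rw [← smul_inv_smul w r, smul_dotProduct_smul_of_weylGroup]
  exact ha _ ((isRoot_smul_iff w⁻¹).2 hr)

lemma smul_mem_two_smul_e8Lattice_iff {s : ℝ⁸} :
    w • s ∈ (2 : ℝ) • e8Lattice ↔ s ∈ (2 : ℝ) • e8Lattice := by
  have smul_mem (w : weylGroup) {s : ℝ⁸} (hs : s ∈ (2 : ℝ) • e8Lattice) :
      w • s ∈ (2 : ℝ) • e8Lattice := by
    obtain ⟨x, hx, rfl⟩ := hs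
    exact ⟨w • x, smul_mem_e8Lattice w hx, (map_smul (w : ℝ⁸ ≃ₗ[ℝ] ℝ⁸) 2 x).symm⟩
  exact ⟨fun h => by simpa using smul_mem w⁻¹ h, smul_mem w⟩

lemma exists_weylGroup_smul_eq {r : ℝ⁸} (hr : isRoot r) :
    ∃ w : weylGroup, ∀ a : ℝ⁸, w • a = a - (r ⬝ᵥ a) • r := by
  let ρ : ℝ⁸ ≃ₗ[ℝ] ℝ⁸ := Module.reflection (f := dotProductBilin ℝ ℝ r) hr.dotProduct_self
  have apply_eq (a : ℝ⁸) : ρ a = a - (r ⬝ᵥ a) • r := Module.reflection_apply a _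
  have isometry (a b : ℝ⁸) : ρ a ⬝ᵥ ρ b = a ⬝ᵥ b := by
    simp only [apply_eq, sub_dotProduct, dotProduct_sub, smul_dotProduct, dotProduct_smul,
      hr.dotProduct_self, dotProduct_comm a r, smul_eq_mul]
    ring
  have maps_roots : Set.MapsTo ρ {a | isRoot a} {a | isRoot a} := fun a ha => by
    refine ⟨?_, (isometry a a).trans ha.2⟩
    obtain ⟨z, hz⟩ := exists_dotProduct_eq_intCast hr.1 ha.1
    rw [apply_eq, hz, Int.cast_smul_eq_zsmul]
    exact e8Lattice.sub_mem ha.1 (e8Lattice.zsmul_mem hr.1 z)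
  have involutive : Function.Involutive ρ := Module.involutive_reflection _
  exact ⟨⟨ρ, isometry, maps_roots.image_subset.antisymm
    fun a ha => ⟨ρ a, maps_roots ha, involutive a⟩⟩, apply_eq⟩

end WeylGroup

section OrthogonalRoots

variable {n : ℕ}

/-- The roots orthogonal to every entry of the tuple `u`. -/
def orthRoots (u : Fin n → ℝ⁸) : Set ℝ⁸ := {r | isRoot r ∧ ∀ i, u i ⬝ᵥ r = 0}

lemma neg_mem_orthRoots {u : Fin n → ℝ⁸} {a : ℝ⁸} (ha : a ∈ orthRoots u) : -a ∈ orthRoots u :=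
  ⟨ha.1.neg, fun i => by rw [dotProduct_neg, ha.2 i, neg_zero]⟩

lemma smul_mem_orthRoots {u : Fin n → ℝ⁸} {a : ℝ⁸} (w : stabilizer weylGroup u)
    (ha : a ∈ orthRoots u) : w • a ∈ orthRoots u := by
  refine ⟨(isRoot_smul_iff w.1).2 ha.1, fun i => ?_⟩
  have hw : w.1 • u i = u i := congrFun w.2 i
  rw [← ha.2 i]
  nth_rw 1 [← hw]
  exact smul_dotProduct_smul_of_weylGroup w.1 _ _

lemma sub_dotProduct_smul_mem_orbit {u : Fin n → ℝ⁸} {r : ℝ⁸} (hr : r ∈ orthRoots u) (a : ℝ⁸) :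
    a - (r ⬝ᵥ a) • r ∈ orbit (stabilizer weylGroup u) a := by
  obtain ⟨w, hw⟩ := exists_weylGroup_smul_eq hr.1
  have w_fixes : w • u = u := funext fun i => by
    rw [Pi.smul_apply, hw, dotProduct_comm, hr.2, zero_smul, sub_zero]
  exact ⟨⟨w, w_fixes⟩, hw a⟩

lemma sub_dotProduct_sub_of_isRoot {a b : ℝ⁸} (ha : isRoot a) (hb : isRoot b) :
    (a - b) ⬝ᵥ (a - b) = 4 - 2 * (a ⬝ᵥ b) := by
  rw [sub_dotProduct, dotProduct_sub, dotProduct_sub, ha.dotProduct_self, hb.dotProduct_self,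
    dotProduct_comm b a]
  ring

lemma eq_of_dotProduct_eq_two {a b : ℝ⁸} (ha : isRoot a) (hb : isRoot b) (h : a ⬝ᵥ b = 2) :
    a = b := by
  have := sub_dotProduct_sub_of_isRoot ha hb
  rw [h, show (4 - 2 * 2 : ℝ) = 0 by norm_num, dotProduct_self_eq_zero] at this
  exact sub_eq_zero.1 this

lemma dotProduct_le_two {a b : ℝ⁸} (ha : isRoot a) (hb : isRoot b) : a ⬝ᵥ b ≤ 2 := by
  have norm_nonneg : 0 ≤ (a - b) ⬝ᵥ (a - b) := Finset.sum_nonneg fun i _ => mul_self_nonneg _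
  linarith [sub_dotProduct_sub_of_isRoot ha hb]

lemma mem_orbit_of_dotProduct_pos {u : Fin n → ℝ⁸} {a b : ℝ⁸} (ha : a ∈ orthRoots u)
    (hb : b ∈ orthRoots u) (h : 0 < a ⬝ᵥ b) : b ∈ orbit (stabilizer weylGroup u) a := by
  obtain ⟨z, hz⟩ := exists_dotProduct_eq_intCast ha.1.1 hb.1.1
  have z_pos : 0 < z := by exact_mod_cast hz ▸ h
  have z_le : z ≤ 2 := by exact_mod_cast hz ▸ dotProduct_le_two ha.1 hb.1
  obtain rfl | rfl : z = 1 ∨ z = 2 := by lia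
  -- `a - b` is a root, and its reflection exchanges `a` and `b`.
  · rw [Int.cast_one] at hz
    have sub_mem : a - b ∈ orthRoots u := by
      refine ⟨⟨e8Lattice.sub_mem ha.1.1 hb.1.1, ?_⟩, fun i => ?_⟩
      · exact (sub_dotProduct_sub_of_isRoot ha.1 hb.1).trans (by rw [hz]; norm_num)
      · rw [dotProduct_sub, ha.2, hb.2, sub_zero]
    have coeff_eq : (a - b) ⬝ᵥ a = 1 := by
      rw [sub_dotProduct, ha.1.dotProduct_self, dotProduct_comm, hz]
      norm_num
    simpa [coeff_eq] using sub_dotProduct_smul_mem_orbit sub_mem a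
  · rw [eq_of_dotProduct_eq_two ha.1 hb.1 hz]
    exact mem_orbit_self b

lemma mem_orbit_of_dotProduct_ne_zero {u : Fin n → ℝ⁸} {a b : ℝ⁸} (ha : a ∈ orthRoots u)
    (hb : b ∈ orthRoots u) (h : a ⬝ᵥ b ≠ 0) : b ∈ orbit (stabilizer weylGroup u) a := by
  obtain h_neg | h_pos := h.lt_or_gt
  · have neg_mem : -b ∈ orbit (stabilizer weylGroup u) a :=
      mem_orbit_of_dotProduct_pos ha (neg_mem_orthRoots hb) (by rwa [dotProduct_neg, neg_pos])
    have neg_mem' : -b ∈ orbit (stabilizer weylGroup u) b := by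
      have := sub_dotProduct_smul_mem_orbit hb b
      rwa [hb.1.dotProduct_self, two_smul, sub_add_cancel_left] at this
    rw [← orbit_eq_iff.2 neg_mem, orbit_eq_iff.2 neg_mem']
    exact mem_orbit_self b
  · exact mem_orbit_of_dotProduct_pos ha hb h_pos

lemma orthRoots_eq_orbit {u : Fin n → ℝ⁸} {c : ℝ⁸} (hc : c ∈ orthRoots u)
    (linked : ∀ a ∈ orthRoots u, ∃ r ∈ orthRoots u, c ⬝ᵥ r ≠ 0 ∧ r ⬝ᵥ a ≠ 0) :
    orthRoots u = orbit (stabilizer weylGroup u) c := by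
  refine Set.Subset.antisymm (fun a ha => ?_) ?_
  · obtain ⟨r, hr, hcr, hra⟩ := linked a ha
    rw [← orbit_eq_iff.2 (mem_orbit_of_dotProduct_ne_zero hc hr hcr)]
    exact mem_orbit_of_dotProduct_ne_zero hr ha hra
  · rintro _ ⟨w, rfl⟩
    exact smul_mem_orthRoots w hc

variable {u : Fin n → ℝ⁸} {k : ℝ⁸}

lemma not_sub_mem_two_smul_e8Lattice {a b : ℝ⁸} (ha : isRoot a) (hb : isRoot b)
    (h : a ⬝ᵥ b = 0) : a - b ∉ (2 : ℝ) • e8Lattice := by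
  rintro ⟨t, ht, h_sub : (2 : ℝ) • t = a - b⟩
  obtain ⟨z, hz⟩ := exists_dotProduct_self_eq_two_mul ht
  have norm_eq := sub_dotProduct_sub_of_isRoot ha hb
  rw [← h_sub, smul_dotProduct, dotProduct_smul, hz, h] at norm_eq
  have : 8 * z = 4 := by
    rify
    simp only [smul_eq_mul] at norm_eq
    linarith
  lia

lemma eq_or_eq_neg_of_dotProduct_ne_zero {y : ℝ⁸} (hk : k ∈ orthRoots u)
    (h_even : k + ∑ i, u i ∈ (2 : ℝ) • e8Lattice) (hy : y ∈ orthRoots u) (h : k ⬝ᵥ y ≠ 0) :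
    y = k ∨ y = -k := by
  obtain ⟨x, hx, h_sum⟩ := h_even
  obtain ⟨z, hz⟩ := exists_dotProduct_eq_intCast hx hy.1.1
  -- `k ⬝ᵥ y` is even, which rules out the values `1` and `-1`.
  have dot_eq : k ⬝ᵥ y = 2 * z :=
    calc k ⬝ᵥ y = (k + ∑ i, u i) ⬝ᵥ y := by simp [add_dotProduct, sum_dotProduct, hy.2]
      _ = 2 * z := by rw [← h_sum, ← hz]; exact smul_dotProduct 2 x y
  have z_ne : z ≠ 0 := by
    rintro rfl
    simp [dot_eq] at h
  have z_le : z ≤ 1 := by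
    have := dotProduct_le_two hk.1 hy.1
    rify
    linarith
  have neg_z_le : -z ≤ 1 := by
    have := dotProduct_le_two hk.1.neg hy.1
    rw [neg_dotProduct] at this
    rify
    linarith
  obtain rfl | rfl : z = 1 ∨ z = -1 := by lia
  · exact .inl (eq_of_dotProduct_eq_two hk.1 hy.1 (by simpa using dot_eq)).symm
  · refine .inr (eq_of_dotProduct_eq_two hk.1.neg hy.1 ?_).symm
    rw [neg_dotProduct, dot_eq]
    norm_num

lemma add_sum_mem_two_smul_e8Lattice_iff {y : ℝ⁸} (hk : k ∈ orthRoots u)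
    (h_even : k + ∑ i, u i ∈ (2 : ℝ) • e8Lattice) (hy : y ∈ orthRoots u) :
    y + ∑ i, u i ∈ (2 : ℝ) • e8Lattice ↔ k ⬝ᵥ y ≠ 0 := by
  refine ⟨fun h h_orth => ?_, fun h => ?_⟩
  · refine not_sub_mem_two_smul_e8Lattice hk.1 hy.1 h_orth ?_
    simpa using sub_mem h_even h
  · obtain rfl | rfl := eq_or_eq_neg_of_dotProduct_ne_zero hk h_even hy h
    · exact h_even
    · have : (2 : ℝ) • k ∈ (2 : ℝ) • e8Lattice :=
        AddSubgroup.smul_mem_pointwise_smul _ _ _ hk.1.1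
      convert sub_mem h_even this using 1
      rw [two_smul]
      abel

lemma smul_add_sum_of_stabilizer (w : stabilizer weylGroup u) (y : ℝ⁸) :
    w • y + ∑ i, u i = w.1 • (y + ∑ i, u i) := by
  have hw (i : Fin n) : w.1 • u i = u i := congrFun w.2 i
  simp only [smul_add, Finset.smul_sum, hw]
  rfl

lemma evenOrthRoots_eq_orbit (hk : k ∈ orthRoots u)
    (h_even : k + ∑ i, u i ∈ (2 : ℝ) • e8Lattice) :
    {y ∈ orthRoots u | y + ∑ i, u i ∈ (2 : ℝ) • e8Lattice} =
      orbit (stabilizer weylGroup u) k := by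
  refine Set.Subset.antisymm (fun y ⟨hy, h⟩ => ?_) ?_
  · rw [add_sum_mem_two_smul_e8Lattice_iff hk h_even hy] at h
    exact mem_orbit_of_dotProduct_ne_zero hk hy h
  · rintro _ ⟨w, rfl⟩
    refine ⟨smul_mem_orthRoots w hk, ?_⟩
    rw [smul_add_sum_of_stabilizer, smul_mem_two_smul_e8Lattice_iff]
    exact h_even

lemma ncard_evenOrthRoots (hk : k ∈ orthRoots u)
    (h_even : k + ∑ i, u i ∈ (2 : ℝ) • e8Lattice) :
    {y ∈ orthRoots u | y + ∑ i, u i ∈ (2 : ℝ) • e8Lattice}.ncard = 2 := by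
  have k_ne_zero : k ≠ 0 := by
    rintro rfl
    simpa using hk.1.dotProduct_self
  rw [← Set.ncard_pair (self_ne_neg.2 k_ne_zero)]
  congr 1
  ext y
  constructor
  · rintro ⟨hy, h⟩
    exact eq_or_eq_neg_of_dotProduct_ne_zero hk h_even hy
      ((add_sum_mem_two_smul_e8Lattice_iff hk h_even hy).1 h)
  · rintro (rfl | rfl)
    · exact ⟨hk, h_even⟩
    · refine ⟨neg_mem_orthRoots hk, (add_sum_mem_two_smul_e8Lattice_iff hk h_even
        (neg_mem_orthRoots hk)).2 ?_⟩
      simp [hk.1.dotProduct_self]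

lemma mem_orthRoots_vecCons {x y : ℝ⁸} :
    y ∈ orthRoots (vecCons x u) ↔ x ⬝ᵥ y = 0 ∧ y ∈ orthRoots u := by
  simp [orthRoots, Fin.forall_fin_succ, and_left_comm]

lemma oddOrthRoots_eq_orthRoots_vecCons (hk : k ∈ orthRoots u)
    (h_even : k + ∑ i, u i ∈ (2 : ℝ) • e8Lattice) :
    {y ∈ orthRoots u | y + ∑ i, u i ∉ (2 : ℝ) • e8Lattice} = orthRoots (vecCons k u) := by
  ext y
  rw [mem_orthRoots_vecCons, and_comm (a := k ⬝ᵥ y = 0)]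
  refine and_congr_right fun hy => ?_
  rw [add_sum_mem_two_smul_e8Lattice_iff hk h_even hy, not_not]

lemma oddOrthRoots_eq_orbit {d : ℝ⁸} (hk : k ∈ orthRoots u)
    (h_even : k + ∑ i, u i ∈ (2 : ℝ) • e8Lattice)
    (hd : orthRoots (vecCons k u) = orbit (stabilizer weylGroup (vecCons k u)) d) :
    {y ∈ orthRoots u | y + ∑ i, u i ∉ (2 : ℝ) • e8Lattice} =
      orbit (stabilizer weylGroup u) d := by
  have odd_eq := oddOrthRoots_eq_orthRoots_vecCons hk h_even
  refine Set.Subset.antisymm ?_ ?_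
  · rw [odd_eq, hd, stabilizer_vecCons]
    rintro _ ⟨w, rfl⟩
    exact ⟨⟨w.1, w.2.2⟩, rfl⟩
  · have hd_mem : d ∈ {y ∈ orthRoots u | y + ∑ i, u i ∉ (2 : ℝ) • e8Lattice} := by
      rw [odd_eq, hd]
      exact mem_orbit_self d
    rintro _ ⟨w, rfl⟩
    refine ⟨smul_mem_orthRoots w hd_mem.1, ?_⟩
    rw [smul_add_sum_of_stabilizer, smul_mem_two_smul_e8Lattice_iff]
    exact hd_mem.2

end OrthogonalRoots

section OrthogonalTuples

variable {n : ℕ}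

/-- The `n`-tuples of pairwise orthogonal roots; `orthTuples 4` is the set V₄. -/
def orthTuples (n : ℕ) : Set (Fin n → ℝ⁸) :=
  {v | (∀ i, isRoot (v i)) ∧ ∀ i j, i ≠ j → v i ⬝ᵥ v j = 0}

lemma smul_mem_orthTuples (w : weylGroup) {v : Fin n → ℝ⁸} (hv : v ∈ orthTuples n) :
    w • v ∈ orthTuples n :=
  ⟨fun i => (isRoot_smul_iff w).2 (hv.1 i), fun i j hij =>
    (smul_dotProduct_smul_of_weylGroup w _ _).trans (hv.2 i j hij)⟩

lemma vecCons_mem_orthTuples {x : ℝ⁸} {u : Fin n → ℝ⁸} :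
    vecCons x u ∈ orthTuples (n + 1) ↔ x ∈ orthRoots u ∧ u ∈ orthTuples n := by
  simp only [orthTuples, orthRoots, Set.mem_ofPred_eq, Fin.forall_fin_succ, cons_val_zero,
    cons_val_succ, ne_eq, not_true_eq_false, Fin.succ_ne_zero, (Fin.succ_ne_zero _).symm,
    Fin.succ_inj, not_false_eq_true, dotProduct_comm x, forall_true_left, forall_and,
    false_imp_iff]
  tauto

lemma sep_orthTuples_succ_eq_orbit {P : ℝ⁸ → Prop} {u : Fin n → ℝ⁸} {x : ℝ⁸}
    (smul_iff : ∀ (w : weylGroup) (s : ℝ⁸), P (w • s) ↔ P s)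
    (tuples_eq : orthTuples n = orbit weylGroup u)
    (fiber_eq : {y ∈ orthRoots u | P (y + ∑ i, u i)} = orbit (stabilizer weylGroup u) x) :
    {v ∈ orthTuples (n + 1) | P (∑ i, v i)} = orbit weylGroup (vecCons x u) := by
  refine eq_orbit_vecCons ?_ ?_ ?_
  · rintro w v ⟨hv, h⟩
    refine ⟨smul_mem_orthTuples w hv, ?_⟩
    simpa only [Pi.smul_apply, ← Finset.smul_sum, smul_iff] using h
  · rintro v ⟨hv, -⟩
    rw [← cons_head_tail v, vecCons_mem_orthTuples] at hv
    exact tuples_eq ▸ hv.2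
  · have hu : u ∈ orthTuples n := tuples_eq ▸ mem_orbit_self u
    rw [← fiber_eq]
    ext y
    simp [vecCons_mem_orthTuples, hu, Fin.sum_univ_succ]

lemma orthTuples_succ_eq_orbit {u : Fin n → ℝ⁸} {x : ℝ⁸}
    (tuples_eq : orthTuples n = orbit weylGroup u)
    (roots_eq : orthRoots u = orbit (stabilizer weylGroup u) x) :
    orthTuples (n + 1) = orbit weylGroup (vecCons x u) := by
  simpa using sep_orthTuples_succ_eq_orbit (P := fun _ => True) (fun _ _ => Iff.rfl) tuples_eq
    (by simpa using roots_eq)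

lemma orthTuples_zero_eq_orbit : orthTuples 0 = orbit weylGroup ![] :=
  Set.Subset.antisymm (fun v _ => Subsingleton.elim ![] v ▸ mem_orbit_self _)
    fun _ _ => ⟨fun i => i.elim0, fun i => i.elim0⟩

end OrthogonalTuples

section DoubledCoordinates

variable {n : ℕ} {K : Fin n → ℤ⁸}

lemma halve_mem_orthRoots {m : ℤ⁸} :
    halve m ∈ orthRoots (halve ∘ K) ↔ IsDoubledRoot m ∧ ∀ j, K j ⬝ᵥ m = 0 := by
  simp [orthRoots, isRoot_halve_iff, halve_dotProduct_halve, and_comm]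

lemma halve_dotProduct_halve_ne_zero {m c : ℤ⁸} : halve c ⬝ᵥ halve m ≠ 0 ↔ c ⬝ᵥ m ≠ 0 := by
  simp [halve_dotProduct_halve]

-- `K` and `R` span `ℝ⁸`, so every root is non-orthogonal to some entry of `K` or `R`.
lemma orthRoots_halve_eq_orbit {c : ℤ⁸} (R : List ℤ⁸)
    (hc : IsDoubledRoot c ∧ ∀ j, K j ⬝ᵥ c = 0)
    (hR : ∀ r ∈ R, (IsDoubledRoot r ∧ ∀ j, K j ⬝ᵥ r = 0) ∧ c ⬝ᵥ r ≠ 0)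
    (span : ∀ m : ℤ⁸, (∀ j, K j ⬝ᵥ m = 0) → (∀ r ∈ R, r ⬝ᵥ m = 0) → m = 0) :
    orthRoots (halve ∘ K) = orbit (stabilizer weylGroup (halve ∘ K)) (halve c) := by
  refine orthRoots_eq_orbit (halve_mem_orthRoots.2 hc) fun a ha => ?_
  obtain ⟨m, rfl⟩ := exists_halve_eq ha.1.1
  obtain ⟨hm, hKm⟩ := halve_mem_orthRoots.1 ha
  by_contra! h
  have m_zero : m = 0 := span m hKm fun r hr => by
    have := h _ (halve_mem_orthRoots.2 (hR r hr).1) (halve_dotProduct_halve_ne_zero.2 (hR r hr).2)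
    rwa [← not_ne_iff, halve_dotProduct_halve_ne_zero, not_ne_iff] at this
  simpa [m_zero] using hm.1

lemma IsDoubledRoot.abs_le_two {m : ℤ⁸} (hm : IsDoubledRoot m) (i : Fin 8) : |m i| ≤ 2 := by
  have sq_le : m i * m i ≤ m ⬝ᵥ m :=
    Finset.single_le_sum (fun j _ => mul_self_nonneg (m j)) (Finset.mem_univ i)
  rw [hm.1] at sq_le
  exact abs_le.2 ⟨by nlinarith, by nlinarith⟩

lemma IsDoubledRoot.mem_piFinset {m : ℤ⁸} (hm : IsDoubledRoot m) :
    m ∈ Fintype.piFinset (fun _ => {-2, 0, 2}) ∨ m ∈ Fintype.piFinset (fun _ => {-1, 1}) := by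
  have bounds (i : Fin 8) := abs_le.1 (hm.abs_le_two i)
  have parity (i : Fin 8) : m i % 2 = m 0 % 2 := hm.2.2 i
  simp only [Fintype.mem_piFinset, Finset.mem_insert, Finset.mem_singleton]
  obtain h | h := Int.emod_two_eq_zero_or_one (m 0)
  · exact .inl fun i => by have := bounds i; have := parity i; lia
  · exact .inr fun i => by have := bounds i; have := parity i; lia

lemma ncard_orthRoots_halve (K : Fin n → ℤ⁸) : (orthRoots (halve ∘ K)).ncard =
    Finset.card {m ∈ Fintype.piFinset fun _ : Fin 8 => ({-2, 0, 2} : Finset ℤ) |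
      IsDoubledRoot m ∧ ∀ j, K j ⬝ᵥ m = 0} +
    Finset.card {m ∈ Fintype.piFinset fun _ : Fin 8 => ({-1, 1} : Finset ℤ) |
      IsDoubledRoot m ∧ ∀ j, K j ⬝ᵥ m = 0} := by
  have orthRoots_eq : orthRoots (halve ∘ K) =
      halve '' {m | IsDoubledRoot m ∧ ∀ j, K j ⬝ᵥ m = 0} := by
    ext a
    refine ⟨fun ha => ?_, ?_⟩
    · obtain ⟨m, rfl⟩ := exists_halve_eq ha.1.1
      exact ⟨m, halve_mem_orthRoots.1 ha, rfl⟩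
    · rintro ⟨m, hm, rfl⟩
      exact halve_mem_orthRoots.2 hm
  rw [orthRoots_eq, Set.ncard_image_of_injective _ halve_injective, ← Finset.card_union_of_disjoint,
    ← Set.ncard_coe_finset, ← Finset.filter_union]
  · congr 1
    ext m
    rw [Finset.mem_coe, Finset.mem_filter, Finset.mem_union, Set.mem_ofPred_eq, iff_and_self]
    exact fun hm => hm.1.mem_piFinset
  · refine Finset.disjoint_filter_filter (Finset.disjoint_left.2 fun m h_even h_odd => ?_)
    have h₀ := Fintype.mem_piFinset.1 h_even 0
    have h₁ := Fintype.mem_piFinset.1 h_odd 0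
    simp only [Finset.mem_insert, Finset.mem_singleton] at h₀ h₁
    lia

end DoubledCoordinates

section Frame

/-- In doubled coordinates, the roots `e₁ + e₂`, `e₃ + e₄`, `e₅ + e₆`, `e₇ + e₈`, whose sum
`(1, …, 1)` lies in `2Λ`. -/
def frame : Fin 4 → ℤ⁸ :=
  ![![2, 2, 0, 0, 0, 0, 0, 0], ![0, 0, 2, 2, 0, 0, 0, 0],
    ![0, 0, 0, 0, 2, 2, 0, 0], ![0, 0, 0, 0, 0, 0, 2, 2]]

/-- In doubled coordinates, the root `e₁ - e₂`. -/
def diffRoot : ℤ⁸ := ![2, -2, 0, 0, 0, 0, 0, 0]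

lemma e8Roots_eq_orbit : orthRoots (halve ∘ ![]) =
    orbit (stabilizer weylGroup (halve ∘ ![])) (halve (frame 0)) := by
  refine orthRoots_halve_eq_orbit [![2, 2, 0, 0, 0, 0, 0, 0], ![2, 0, 2, 0, 0, 0, 0, 0],
    ![2, 0, -2, 0, 0, 0, 0, 0], ![2, 0, 0, 2, 0, 0, 0, 0], ![2, 0, 0, 0, 2, 0, 0, 0],
    ![2, 0, 0, 0, 0, 2, 0, 0], ![2, 0, 0, 0, 0, 0, 2, 0], ![2, 0, 0, 0, 0, 0, 0, 2]]
    (by decide +kernel) (by decide +kernel) fun m _ hR => ?_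
  simp only [List.forall_mem_cons, dotProduct, Fin.sum_univ_eight, cons_val] at hR
  ext i
  fin_cases i <;> simp <;> lia

lemma e7Roots_eq_orbit : orthRoots (halve ∘ ![frame 0]) =
    orbit (stabilizer weylGroup (halve ∘ ![frame 0])) (halve (frame 1)) := by
  refine orthRoots_halve_eq_orbit [![0, 0, 2, 0, 2, 0, 0, 0], ![0, 0, 2, 0, -2, 0, 0, 0],
    ![0, 0, 2, 2, 0, 0, 0, 0], ![0, 0, 2, 0, 0, 2, 0, 0], ![0, 0, 2, 0, 0, 0, 2, 0],
    ![0, 0, 2, 0, 0, 0, 0, 2], ![1, -1, 1, 1, 1, 1, 1, -1]]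
    (by decide +kernel) (by decide +kernel) fun m hK hR => ?_
  simp only [Fin.forall_fin_succ, cons_val_succ, List.forall_mem_cons, dotProduct,
    Fin.sum_univ_eight, frame, cons_val] at hK hR
  ext i
  fin_cases i <;> simp <;> lia

lemma d6Roots_eq_orbit : orthRoots (halve ∘ ![frame 1, frame 0]) =
    orbit (stabilizer weylGroup (halve ∘ ![frame 1, frame 0])) (halve (frame 2)) := by
  refine orthRoots_halve_eq_orbit [![0, 0, 0, 0, 2, 0, 2, 0], ![0, 0, 0, 0, 2, 0, -2, 0],
    ![0, 0, 0, 0, 2, 2, 0, 0], ![0, 0, 0, 0, 2, 0, 0, 2], ![1, -1, 1, -1, 1, 1, 1, 1],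
    ![1, -1, -1, 1, 1, 1, 1, 1]]
    (by decide +kernel) (by decide +kernel) fun m hK hR => ?_
  simp only [Fin.forall_fin_succ, cons_val_succ, List.forall_mem_cons, dotProduct,
    Fin.sum_univ_eight, frame, cons_val] at hK hR
  ext i
  fin_cases i <;> simp <;> lia

lemma d4Roots_eq_orbit :
    orthRoots (halve ∘ ![frame 3, frame 2, frame 1, frame 0]) =
      orbit (stabilizer weylGroup
        (halve ∘ ![frame 3, frame 2, frame 1, frame 0])) (halve diffRoot) := by
  refine orthRoots_halve_eq_orbit [diffRoot, ![1, -1, 1, -1, 1, -1, 1, -1],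
    ![1, -1, 1, -1, 1, -1, -1, 1], ![1, -1, 1, -1, -1, 1, 1, -1]]
    (by decide +kernel) (by decide +kernel) fun m hK hR => ?_
  simp only [Fin.forall_fin_succ, cons_val_succ, List.forall_mem_cons, dotProduct,
    Fin.sum_univ_eight, frame, diffRoot, cons_val] at hK hR
  ext i
  fin_cases i <;> simp <;> lia

set_option maxRecDepth 100000 in
lemma ncard_e8Roots : (orthRoots (halve ∘ ![])).ncard = 240 := by
  rw [ncard_orthRoots_halve]
  simp only [IsDoubledRoot, dotProduct, Fin.sum_univ_eight]
  decide +kernel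

set_option maxRecDepth 100000 in
lemma ncard_e7Roots : (orthRoots (halve ∘ ![frame 0])).ncard = 126 := by
  rw [ncard_orthRoots_halve]
  simp only [IsDoubledRoot, dotProduct, Fin.sum_univ_eight]
  decide +kernel

set_option maxRecDepth 100000 in
lemma ncard_d6Roots : (orthRoots (halve ∘ ![frame 1, frame 0])).ncard = 60 := by
  rw [ncard_orthRoots_halve]
  simp only [IsDoubledRoot, dotProduct, Fin.sum_univ_eight]
  decide +kernel

set_option maxRecDepth 100000 in
lemma ncard_d4Roots :
    (orthRoots (halve ∘ ![frame 3, frame 2, frame 1, frame 0])).ncard = 24 := by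
  rw [ncard_orthRoots_halve]
  simp only [IsDoubledRoot, dotProduct, Fin.sum_univ_eight]
  decide +kernel

lemma halve_comp_vecCons {n : ℕ} (k : ℤ⁸) (K : Fin n → ℤ⁸) :
    halve ∘ vecCons k K = vecCons (halve k) (halve ∘ K) :=
  Fin.comp_cons halve k K

lemma orthTuples_three_eq_orbit :
    orthTuples 3 = orbit weylGroup (halve ∘ ![frame 2, frame 1, frame 0]) := by
  have h₀ : orthTuples 0 = orbit weylGroup (halve ∘ ![]) :=
    orthTuples_zero_eq_orbit.trans (congrArg _ (Subsingleton.elim _ _))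
  have h₁ := orthTuples_succ_eq_orbit h₀ e8Roots_eq_orbit
  rw [← halve_comp_vecCons] at h₁
  have h₂ := orthTuples_succ_eq_orbit h₁ e7Roots_eq_orbit
  rw [← halve_comp_vecCons] at h₂
  have h₃ := orthTuples_succ_eq_orbit h₂ d6Roots_eq_orbit
  rwa [← halve_comp_vecCons] at h₃

lemma ncard_orthTuples_three : (orthTuples 3).ncard = 240 * 126 * 60 := by
  have ncard_empty : (orbit weylGroup (halve ∘ ![])).ncard = 1 := Set.ncard_eq_one.2
    ⟨_, Set.subsingleton_of_subsingleton.eq_singleton_of_mem (mem_orbit_self _)⟩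
  rw [orthTuples_three_eq_orbit,
    halve_comp_vecCons, ncard_orbit_vecCons, ← d6Roots_eq_orbit, ncard_d6Roots,
    halve_comp_vecCons, ncard_orbit_vecCons, ← e7Roots_eq_orbit, ncard_e7Roots,
    halve_comp_vecCons, ncard_orbit_vecCons, ← e8Roots_eq_orbit, ncard_e8Roots,
    ncard_empty, one_mul]

lemma frame_three_mem_orthRoots :
    halve (frame 3) ∈ orthRoots (halve ∘ ![frame 2, frame 1, frame 0]) :=
  halve_mem_orthRoots.2 (by decide +kernel)

lemma halve_frame_three_add_sum_mem :
    halve (frame 3) + ∑ i, (halve ∘ ![frame 2, frame 1, frame 0]) i ∈ (2 : ℝ) • e8Lattice := by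
  rw [mem_two_smul_e8Lattice]
  refine ⟨halve 1, inLambda_halve_iff.2 (by decide), funext fun i => ?_⟩
  fin_cases i <;> simp [Fin.sum_univ_three, halve, frame]

lemma evenQuadruples_eq_orbit :
    {v ∈ orthTuples 4 | ∑ i, v i ∈ (2 : ℝ) • e8Lattice} =
      orbit weylGroup (vecCons (halve (frame 3)) (halve ∘ ![frame 2, frame 1, frame 0])) :=
  sep_orthTuples_succ_eq_orbit (fun w _ => smul_mem_two_smul_e8Lattice_iff w)
    orthTuples_three_eq_orbit
    (evenOrthRoots_eq_orbit frame_three_mem_orthRoots halve_frame_three_add_sum_mem)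

lemma oddQuadruples_fiber_eq_orbit :
    {y ∈ orthRoots (halve ∘ ![frame 2, frame 1, frame 0]) |
        y + ∑ i, (halve ∘ ![frame 2, frame 1, frame 0]) i ∉ (2 : ℝ) • e8Lattice} =
      orbit (stabilizer weylGroup (halve ∘ ![frame 2, frame 1, frame 0])) (halve diffRoot) := by
  refine oddOrthRoots_eq_orbit frame_three_mem_orthRoots halve_frame_three_add_sum_mem ?_
  rw [← halve_comp_vecCons]
  exact d4Roots_eq_orbit

lemma oddQuadruples_eq_orbit :
    {v ∈ orthTuples 4 | ∑ i, v i ∉ (2 : ℝ) • e8Lattice} =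
      orbit weylGroup (vecCons (halve diffRoot) (halve ∘ ![frame 2, frame 1, frame 0])) :=
  sep_orthTuples_succ_eq_orbit (P := (· ∉ (2 : ℝ) • e8Lattice))
    (fun w _ => (smul_mem_two_smul_e8Lattice_iff w).not)
    orthTuples_three_eq_orbit oddQuadruples_fiber_eq_orbit

lemma ncard_evenQuadruples :
    {v ∈ orthTuples 4 | ∑ i, v i ∈ (2 : ℝ) • e8Lattice}.ncard = 3628800 := by
  rw [evenQuadruples_eq_orbit, ncard_orbit_vecCons, ← orthTuples_three_eq_orbit,
    ncard_orthTuples_three,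
    ← evenOrthRoots_eq_orbit frame_three_mem_orthRoots halve_frame_three_add_sum_mem,
    ncard_evenOrthRoots frame_three_mem_orthRoots halve_frame_three_add_sum_mem]

lemma ncard_oddQuadruples :
    {v ∈ orthTuples 4 | ∑ i, v i ∉ (2 : ℝ) • e8Lattice}.ncard = 43545600 := by
  rw [oddQuadruples_eq_orbit, ncard_orbit_vecCons, ← orthTuples_three_eq_orbit,
    ncard_orthTuples_three, ← oddQuadruples_fiber_eq_orbit,
    oddOrthRoots_eq_orthRoots_vecCons frame_three_mem_orthRoots halve_frame_three_add_sum_mem,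
    ← halve_comp_vecCons, ncard_d4Roots]

end Frame

/-- The set `V₄` of quadruples of pairwise orthogonal roots is the
disjoint union of exactly two Weyl group orbits: `O`, the quadruples whose sum
lies in `2Λ` (3628800 elements), and `Y = V₄ \ O` (43545600 elements). Two
quadruples in `V₄` are conjugate under `W` if and only if they lie in the same
part of this partition. -/
theorem stmt_10 :
    {v : Fin 4 → (Fin 8 → ℝ) |
      (∀ i, isRoot (v i)) ∧ (∀ i j, i ≠ j → dot (v i) (v j) = 0) ∧
      ∃ x, inLambda x ∧ (∑ i, v i) = (2 : ℝ) • x}.ncard = 3628800 ∧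
    {v : Fin 4 → (Fin 8 → ℝ) |
      (∀ i, isRoot (v i)) ∧ (∀ i j, i ≠ j → dot (v i) (v j) = 0) ∧
      ¬∃ x, inLambda x ∧ (∑ i, v i) = (2 : ℝ) • x}.ncard = 43545600 ∧
    ∀ u v : Fin 4 → (Fin 8 → ℝ),
      (∀ i, isRoot (u i)) → (∀ i j, i ≠ j → dot (u i) (u j) = 0) →
      (∀ i, isRoot (v i)) → (∀ i j, i ≠ j → dot (v i) (v j) = 0) →
      ((∃ w : (Fin 8 → ℝ) ≃ₗ[ℝ] (Fin 8 → ℝ), IsWeyl w ∧ ∀ i, w (u i) = v i) ↔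
        ((∃ x, inLambda x ∧ (∑ i, u i) = (2 : ℝ) • x) ↔
          (∃ x, inLambda x ∧ (∑ i, v i) = (2 : ℝ) • x))) := by
  simp only [← mem_two_smul_e8Lattice]
  refine ⟨?_, ?_, fun u v hu_root hu_orth hv_root hv_orth => ?_⟩
  · rw [← ncard_evenQuadruples]
    simp only [← and_assoc]
    rfl
  · rw [← ncard_oddQuadruples]
    simp only [← and_assoc]
    rfl
  have hu : u ∈ orthTuples 4 := ⟨hu_root, hu_orth⟩
  have hv : v ∈ orthTuples 4 := ⟨hv_root, hv_orth⟩
  have conj_iff : (∃ w : ℝ⁸ ≃ₗ[ℝ] ℝ⁸, IsWeyl w ∧ ∀ i, w (u i) = v i) ↔ v ∈ orbit weylGroup u :=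
    ⟨fun ⟨w, hw, h⟩ => ⟨⟨w, hw⟩, funext h⟩, fun ⟨w, h⟩ => ⟨w, w.2, congrFun h⟩⟩
  rw [conj_iff]
  by_cases hu_even : ∑ i, u i ∈ (2 : ℝ) • e8Lattice
  · rw [orbit_eq_iff.2 (evenQuadruples_eq_orbit.subset ⟨hu, hu_even⟩), ← evenQuadruples_eq_orbit]
    simp [hv, hu_even]
  · rw [orbit_eq_iff.2 (oddQuadruples_eq_orbit.subset ⟨hu, hu_even⟩), ← oddQuadruples_eq_orbit]
    simp [hv, hu_even]
end
end

section
/- Set n₅ = 1, n₆ = 3, n₇ = 7, n₈ = 14. Let r ∈ {5,6,7,8} and let K ⊆ E be a set of r pairwise orthogonal roots. Then exactly n_r of the 4-element subsets {a,b,c,d} of K satisfy a + b + c + d ∈ 2Λ. -/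
noncomputable section

/-!
Identify the subsets of `K` with binary vectors indexed by `K`. The subsets whose sum lies in `2Λ`
form a linear code `C`. If `∑ e ∈ s, e = 2x` with `x ∈ Λ`, then `4 (x · x) = 2 |s|` and `x · x` is
even, so `4 ∣ |s|`: the code is doubly even. The image of `K` in `Λ / 2Λ` spans a totally isotropic
subspace for the form induced by the unimodular lattice `Λ`, so it has dimension at most `4`
and `dim C ≥ r - 4`. Conversely, nonzero codewords have weight at least `4`, so two of them
supported in the same five coordinates coincide; deleting all the other coordinates gives
`dim C ≤ r - 4`. Hence `|C| = 2 ^ (r - 4)`. For `r ≤ 7` every nonzero codeword has weight `4`. For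
`r = 8` adjoining the all-one vector keeps the code doubly even, so by the dimension bound that
vector is already in `C`, and it is the only nonzero codeword of weight other than `4`.
-/

open Matrix

section BinaryCodes

variable {ι : Type*} [Fintype ι]

/-- The support of a binary vector; every finite set of coordinates is the support of exactly one
vector, so subsets can be counted as codewords. -/
def codewordSupport (c : ι → ZMod 2) : Finset ι := {i | c i ≠ 0}

/-- A linear binary code all of whose Hamming weights are divisible by four. -/
def IsDoublyEven (C : Submodule (ZMod 2) (ι → ZMod 2)) : Prop :=
  ∀ c ∈ C, 4 ∣ hammingNorm c

theorem eq_zero_or_eq_one_of_zmod_two (a : ZMod 2) : a = 0 ∨ a = 1 := by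
  revert a
  decide

theorem mem_codewordSupport {c : ι → ZMod 2} {i : ι} : i ∈ codewordSupport c ↔ c i ≠ 0 := by
  simp only [codewordSupport, Finset.mem_filter_univ]

theorem card_codewordSupport (c : ι → ZMod 2) : (codewordSupport c).card = hammingNorm c := rfl

theorem codewordSupport_bijective :
    Function.Bijective (codewordSupport : (ι → ZMod 2) → Finset ι) := by
  classical
  refine Function.bijective_iff_has_inverse.mpr ⟨fun s i => if i ∈ s then 1 else 0, ?_, ?_⟩
  · intro c
    ext i
    rcases eq_zero_or_eq_one_of_zmod_two (c i) with h | h <;> simp [mem_codewordSupport, h]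
  · intro s
    ext i
    simp [mem_codewordSupport]

theorem codewordSupport_one : codewordSupport (1 : ι → ZMod 2) = Finset.univ := by
  ext i
  simp [mem_codewordSupport]

theorem codewordSupport_add [DecidableEq ι] (c d : ι → ZMod 2) :
    codewordSupport (c + d) = symmDiff (codewordSupport c) (codewordSupport d) := by
  have add_ne_zero : ∀ a b : ZMod 2, a + b ≠ 0 ↔ a ≠ 0 ∧ b = 0 ∨ b ≠ 0 ∧ a = 0 := by decide
  ext i
  simp [mem_codewordSupport, Finset.mem_symmDiff, add_ne_zero]

theorem hammingNorm_add_add_two_mul_card_inter [DecidableEq ι] (c d : ι → ZMod 2) :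
    hammingNorm (c + d) + 2 * (codewordSupport c ∩ codewordSupport d).card =
      hammingNorm c + hammingNorm d := by
  have hc := Finset.card_sdiff_add_card_inter (codewordSupport c) (codewordSupport d)
  have hd := Finset.card_sdiff_add_card_inter (codewordSupport d) (codewordSupport c)
  rw [Finset.inter_comm] at hd
  simp only [← card_codewordSupport, codewordSupport_add]
  rw [symmDiff_def, Finset.sup_eq_union, Finset.card_union_of_disjoint disjoint_sdiff_sdiff]
  lia

theorem hammingNorm_add_one_add (c : ι → ZMod 2) :
    hammingNorm (c + 1) + hammingNorm c = Fintype.card ι := by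
  classical
  have h := hammingNorm_add_add_two_mul_card_inter c 1
  rw [← card_codewordSupport 1, codewordSupport_one, Finset.inter_univ, Finset.card_univ,
    card_codewordSupport] at h
  lia

theorem hammingNorm_eq_card_iff {c : ι → ZMod 2} : hammingNorm c = Fintype.card ι ↔ c = 1 := by
  rw [← card_codewordSupport, Finset.card_eq_iff_eq_univ, ← codewordSupport_one,
    codewordSupport_bijective.injective.eq_iff]

theorem hammingNorm_add_add_le_two_mul_card {T : Finset ι} {c d : ι → ZMod 2}
    (hcT : codewordSupport c ⊆ T) (hdT : codewordSupport d ⊆ T) :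
    hammingNorm (c + d) + hammingNorm c + hammingNorm d ≤ 2 * T.card := by
  classical
  have h_union := Finset.card_le_card (Finset.union_subset hcT hdT)
  have h_inter := Finset.card_union_add_card_inter (codewordSupport c) (codewordSupport d)
  have h_add := hammingNorm_add_add_two_mul_card_inter c d
  simp only [card_codewordSupport] at h_inter
  lia

theorem finrank_le_one_of_forall_ne_zero_eq {V : Type*} [AddCommGroup V] [Module (ZMod 2) V]
    (h : ∀ v w : V, v ≠ 0 → w ≠ 0 → v = w) : Module.finrank (ZMod 2) V ≤ 1 := by
  rcases subsingleton_or_nontrivial V with _ | _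
  · simp [Module.finrank_zero_of_subsingleton]
  · obtain ⟨v, hv⟩ := exists_ne (0 : V)
    refine finrank_le_one v fun w => ?_
    rcases eq_or_ne w 0 with rfl | hw
    · exact ⟨0, zero_smul _ v⟩
    · exact ⟨1, by rw [one_smul, h v w hv hw]⟩

variable {C : Submodule (ZMod 2) (ι → ZMod 2)}

theorem eq_of_codewordSupport_subset {δ : ℕ} (hC : ∀ c ∈ C, c ≠ 0 → δ ≤ hammingNorm c)
    {T : Finset ι} (hT : 2 * T.card < 3 * δ) {c d : ι → ZMod 2} (hc : c ∈ C) (hd : d ∈ C)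
    (hcT : codewordSupport c ⊆ T) (hdT : codewordSupport d ⊆ T) (hc0 : c ≠ 0) (hd0 : d ≠ 0) :
    c = d := by
  have h_le := hammingNorm_add_add_le_two_mul_card hcT hdT
  have h_add : c + d = 0 := by
    by_contra h_ne
    have h_ge := hC _ (C.add_mem hc hd) h_ne
    have h_ge_c := hC c hc hc0
    have h_ge_d := hC d hd hd0
    lia
  rw [eq_neg_of_add_eq_zero_left h_add, ZModModule.neg_eq_self]

/-- At most one nonzero codeword vanishes outside `t` given coordinates, so deleting the other
coordinates loses at most one dimension. -/
theorem finrank_add_le_card_add_one {δ t : ℕ} (hC : ∀ c ∈ C, c ≠ 0 → δ ≤ hammingNorm c)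
    (hδ : 2 * t < 3 * δ) (ht : t ≤ Fintype.card ι) :
    Module.finrank (ZMod 2) C + t ≤ Fintype.card ι + 1 := by
  classical
  obtain ⟨T, -, rfl⟩ := Finset.exists_subset_card_eq (s := Finset.univ (α := ι)) ht
  let restrict := LinearMap.funLeft (ZMod 2) (ZMod 2) ((↑) : {i // i ∉ T} → ι) ∘ₗ C.subtype
  have support_subset (c : LinearMap.ker restrict) :
      codewordSupport (c : ι → ZMod 2) ⊆ T := fun i hi => by
    by_contra hiT
    exact mem_codewordSupport.mp hi (congrFun c.2 ⟨i, hiT⟩)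
  have h_ker : Module.finrank (ZMod 2) (LinearMap.ker restrict) ≤ 1 := by
    refine finrank_le_one_of_forall_ne_zero_eq fun c d hc hd => ?_
    refine Subtype.ext (Subtype.ext ?_)
    exact eq_of_codewordSupport_subset hC hδ c.1.2 d.1.2 (support_subset c) (support_subset d)
      (by simpa using hc) (by simpa using hd)
  have h_range :
      Module.finrank (ZMod 2) (LinearMap.range restrict) ≤ Fintype.card ι - T.card := by
    simpa [Fintype.card_subtype_compl] using Submodule.finrank_le (LinearMap.range restrict)
  have h_add := restrict.finrank_range_add_finrank_ker
  lia

namespace IsDoublyEven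

theorem four_le_hammingNorm (hC : IsDoublyEven C) {c : ι → ZMod 2} (hc : c ∈ C) (hc0 : c ≠ 0) :
    4 ≤ hammingNorm c :=
  Nat.le_of_dvd (hammingNorm_pos_iff.mpr hc0) (hC c hc)

theorem finrank_add_four_le_card (hC : IsDoublyEven C) (hι : 5 ≤ Fintype.card ι) :
    Module.finrank (ZMod 2) C + 4 ≤ Fintype.card ι := by
  have h := finrank_add_le_card_add_one (t := 5) (fun _ hc => hC.four_le_hammingNorm hc)
    (by norm_num) hι
  lia

theorem sup_span_one (hC : IsDoublyEven C) (hι : 4 ∣ Fintype.card ι) :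
    IsDoublyEven (C ⊔ Submodule.span (ZMod 2) {1}) := by
  intro d hd
  obtain ⟨c, hc, e, he, rfl⟩ := Submodule.mem_sup.mp hd
  obtain ⟨a, rfl⟩ := Submodule.mem_span_singleton.mp he
  rcases eq_zero_or_eq_one_of_zmod_two a with rfl | rfl
  · simpa using hC c hc
  · have h := hammingNorm_add_one_add c
    simpa using (Nat.dvd_add_left (hC c hc)).mp (h ▸ hι)

theorem one_mem (hC : IsDoublyEven C) (hι : Fintype.card ι = 8)
    (hdim : 4 ≤ Module.finrank (ZMod 2) C) : 1 ∈ C := by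
  have h_sup := hC.sup_span_one (by rw [hι]; norm_num)
  have h_le := h_sup.finrank_add_four_le_card (by lia)
  have h_eq : C = C ⊔ Submodule.span (ZMod 2) {1} :=
    Submodule.eq_of_le_of_finrank_le le_sup_left (by lia)
  rw [h_eq]
  exact Submodule.mem_sup_right (Submodule.mem_span_singleton_self 1)

theorem ncard_hammingNorm_eq_four_of_card_lt (hC : IsDoublyEven C) (hι : Fintype.card ι < 8) :
    {c | c ∈ C ∧ hammingNorm c = 4}.ncard = 2 ^ Module.finrank (ZMod 2) C - 1 := by
  have h_eq : {c | c ∈ C ∧ hammingNorm c = 4} = (C : Set (ι → ZMod 2)) \ {0} := by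
    ext c
    refine and_congr_right fun hc => ?_
    have h_dvd := hC c hc
    have h_le := hammingNorm_le_card_fintype (x := c)
    rw [Set.mem_singleton_iff, ← hammingNorm_eq_zero]
    lia
  rw [h_eq, Set.ncard_sdiff_singleton_of_mem C.zero_mem, ← Nat.card_coe_set_eq,
    SetLike.coe_sort_coe, Module.natCard_eq_pow_finrank (K := ZMod 2), Nat.card_zmod]

theorem ncard_hammingNorm_eq_four_of_card_eq (hC : IsDoublyEven C) (hι : Fintype.card ι = 8)
    (h_one : 1 ∈ C) :
    {c | c ∈ C ∧ hammingNorm c = 4}.ncard = 2 ^ Module.finrank (ZMod 2) C - 2 := by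
  have h_eq : {c | c ∈ C ∧ hammingNorm c = 4} = (C : Set (ι → ZMod 2)) \ {0, 1} := by
    ext c
    refine and_congr_right fun hc => ?_
    have h_dvd := hC c hc
    have h_le := hammingNorm_le_card_fintype (x := c)
    rw [Set.mem_insert_iff, Set.mem_singleton_iff, ← hammingNorm_eq_zero,
      ← hammingNorm_eq_card_iff]
    lia
  have h_pair : ({0, 1} : Set (ι → ZMod 2)) ⊆ C := Set.pair_subset C.zero_mem h_one
  have : Nonempty ι := Fintype.card_pos_iff.mp (by lia)
  rw [h_eq, Set.ncard_sdiff h_pair, Set.ncard_pair zero_ne_one, ← Nat.card_coe_set_eq,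
    SetLike.coe_sort_coe, Module.natCard_eq_pow_finrank (K := ZMod 2), Nat.card_zmod]

end IsDoublyEven

end BinaryCodes

theorem map_mulVec_comp {m n R S : Type*} [Fintype n] [NonAssocSemiring R] [NonAssocSemiring S]
    (f : R →+* S) (M : Matrix m n R) (v : n → R) : M.map f *ᵥ (f ∘ v) = f ∘ (M *ᵥ v) :=
  funext fun i => (f.map_mulVec M v i).symm

section RelationCodes

theorem two_mul_finrank_span_le_card_of_isotropic {F ι κ : Type*} [Field F] [Finite ι] [Fintype κ]
    [DecidableEq κ] {G : Matrix κ κ F} (hG : IsUnit G.det) {v : ι → κ → F}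
    (hv : ∀ i j, v i ⬝ᵥ G *ᵥ v j = 0) :
    2 * Module.finrank F (Submodule.span F (Set.range v)) ≤ Fintype.card κ := by
  have := Fintype.ofFinite ι
  have h_mul : of v * G * (of v)ᵀ = 0 := by
    ext i j
    exact (dotProduct_mulVec (v i) G (v j)).symm.trans (hv i j)
  have h_rank := rank_add_rank_le_card_of_mul_eq_zero h_mul
  have h_row : (of v).row = v := rfl
  rw [rank_mul_eq_left_of_isUnit_det G _ hG, rank_transpose, rank_eq_finrank_span_row,
    h_row] at h_rank
  lia

variable {ι κ : Type*} [Fintype ι]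

/-- The binary code of the linear relations modulo two within a family of integer vectors. -/
def relationCode (y : ι → κ → ℤ) : Submodule (ZMod 2) (ι → ZMod 2) :=
  LinearMap.ker (Fintype.linearCombination (ZMod 2) fun i k => (y i k : ZMod 2))

theorem linearCombination_cast_apply (y : ι → κ → ℤ) (c : ι → ZMod 2) (k : κ) :
    Fintype.linearCombination (ZMod 2) (fun i k => (y i k : ZMod 2)) c k =
      ((∑ i ∈ codewordSupport c, y i k : ℤ) : ZMod 2) := by
  have mul_eq_ite (a : ZMod 2) (m : ℤ) : a * m = if a ≠ 0 then (m : ZMod 2) else 0 := by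
    rcases eq_zero_or_eq_one_of_zmod_two a with rfl | rfl <;> simp
  simp only [Fintype.linearCombination_apply, Finset.sum_apply, Pi.smul_apply, smul_eq_mul,
    mul_eq_ite, codewordSupport, Int.cast_sum]
  rw [Finset.sum_filter]

theorem mem_relationCode_iff {y : ι → κ → ℤ} {c : ι → ZMod 2} :
    c ∈ relationCode y ↔ ∃ z : κ → ℤ, ∑ i ∈ codewordSupport c, y i = 2 • z := by
  simp only [relationCode, LinearMap.mem_ker, funext_iff, linearCombination_cast_apply,
    Pi.zero_apply, ZMod.intCast_zmod_eq_zero_iff_dvd, dvd_def, Classical.skolem, Finset.sum_apply,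
    Pi.add_apply, two_nsmul, Nat.cast_ofNat, two_mul]

variable [Fintype κ] {G : Matrix κ κ ℤ} {y : ι → κ → ℤ}

theorem two_mul_card_le_two_mul_finrank_relationCode_add [DecidableEq κ] (hG : Odd G.det)
    (hy : ∀ i j, Even (y i ⬝ᵥ G *ᵥ y j)) :
    2 * Fintype.card ι ≤ 2 * Module.finrank (ZMod 2) (relationCode y) + Fintype.card κ := by
  let mod_two := Int.castRingHom (ZMod 2)
  have h_det : IsUnit (G.map mod_two).det := by
    rw [← RingHom.mapMatrix_apply, ← RingHom.map_det]
    exact isUnit_iff_exists_inv.mpr ⟨1, (mul_one _).trans (ZMod.intCast_eq_one_iff_odd.mpr hG)⟩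
  have h_isotropic (i j : ι) : (mod_two ∘ y i) ⬝ᵥ G.map mod_two *ᵥ (mod_two ∘ y j) = 0 := by
    rw [map_mulVec_comp, ← RingHom.map_dotProduct]
    exact (ZMod.intCast_zmod_eq_zero_iff_dvd _ 2).mpr (hy i j).two_dvd
  have h_span := two_mul_finrank_span_le_card_of_isotropic h_det h_isotropic
  have h_add := (Fintype.linearCombination (ZMod 2)
    fun i k => (y i k : ZMod 2)).finrank_range_add_finrank_ker
  rw [Fintype.range_linearCombination, Module.finrank_fintype_fun_eq_card] at h_add
  change Module.finrank (ZMod 2) (Submodule.span (ZMod 2) (Set.range fun i => mod_two ∘ y i)) +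
    Module.finrank (ZMod 2) (relationCode y) = _ at h_add
  lia

variable [DecidableEq ι]

theorem isDoublyEven_relationCode (hG : ∀ z : κ → ℤ, Even (z ⬝ᵥ G *ᵥ z))
    (hy : ∀ i j, y i ⬝ᵥ G *ᵥ y j = if i = j then 2 else 0) : IsDoublyEven (relationCode y) := by
  intro c hc
  obtain ⟨z, hz⟩ := mem_relationCode_iff.mp hc
  obtain ⟨q, hq⟩ := hG z
  have h_norm : (2 • z) ⬝ᵥ G *ᵥ (2 • z) = 2 * (hammingNorm c : ℤ) := by
    rw [← hz, ← card_codewordSupport]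
    simp [sum_dotProduct, mulVec_sum, dotProduct_sum, hy, mul_comm]
  rw [mulVec_smul, smul_dotProduct, dotProduct_smul, hq] at h_norm
  lia

end RelationCodes

section GramMatrix

theorem even_dotProduct_mulVec_self {κ : Type*} [Fintype κ] {G : Matrix κ κ ℤ} (hG : G.IsSymm)
    (h_diag : ∀ i, Even (G i i)) (z : κ → ℤ) : Even (z ⬝ᵥ G *ᵥ z) := by
  refine even_iff_two_dvd.mpr ((ZMod.intCast_zmod_eq_zero_iff_dvd _ 2).mp ?_)
  simp only [dotProduct, mulVec, Finset.mul_sum, ← Fintype.sum_prod_type', Int.cast_sum]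
  refine Finset.sum_involution (fun ij _ => ij.swap) ?_ ?_ (fun _ _ => Finset.mem_univ _)
    (fun _ _ => Prod.swap_swap _)
  · rintro ⟨i, j⟩ -
    rw [Prod.swap, hG.apply i j, show z j * (G i j * z i) = z i * (G i j * z j) by ring]
    exact CharTwo.add_self_eq_zero _
  · rintro ⟨i, j⟩ - h_ne h_swap
    obtain rfl : j = i := congrArg Prod.fst h_swap
    refine h_ne ((ZMod.intCast_zmod_eq_zero_iff_dvd _ 2).mpr ?_)
    exact (((h_diag j).mul_right _).mul_left _).two_dvd

variable {κ R : Type*} [Fintype κ] [DecidableEq κ] [CommRing R] {S : Matrix κ κ R}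
  {G : Matrix κ κ ℤ}

theorem isUnit_of_mul_transpose_eq_map_intCast (hG : IsUnit G.det)
    (hS : S * Sᵀ = G.map Int.cast) : IsUnit S := by
  have h_map : IsUnit (G.map (Int.castRingHom R)).det := by
    rw [← RingHom.mapMatrix_apply, ← RingHom.map_det]
    exact hG.map _
  have h_mul : IsUnit (S.det * Sᵀ.det) := by
    rw [← det_mul, hS]
    exact h_map
  exact (isUnit_iff_isUnit_det S).mpr (isUnit_of_mul_isUnit_left h_mul)

theorem exists_intCast_vecMul_eq (hG : IsUnit G.det) (hS : S * Sᵀ = G.map Int.cast)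
    {a : κ → R} {k : κ → ℤ} (hk : S *ᵥ a = Int.cast ∘ k) :
    ∃ y : κ → ℤ, (Int.cast ∘ y) ᵥ* S = a := by
  let cast := Int.castRingHom R
  refine ⟨G⁻¹ *ᵥ k,
    mulVec_injective_of_isUnit (isUnit_of_mul_transpose_eq_map_intCast hG hS) ?_⟩
  calc S *ᵥ ((cast ∘ (G⁻¹ *ᵥ k)) ᵥ* S)
      = G.map cast *ᵥ (cast ∘ (G⁻¹ *ᵥ k)) := by
        rw [← mulVec_transpose, mulVec_mulVec, hS]
        rfl
    _ = cast ∘ (G *ᵥ (G⁻¹ *ᵥ k)) := map_mulVec_comp cast G _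
    _ = cast ∘ k := by rw [mulVec_mulVec, mul_nonsing_inv G hG, one_mulVec]
    _ = S *ᵥ a := hk.symm

end GramMatrix

section E8

open CartanMatrix

/-- The simple roots of E8 in Bourbaki's numbering, as the rows of a matrix. -/
def simpleRoots : Matrix (Fin 8) (Fin 8) ℝ :=
  !![1/2, -1/2, -1/2, -1/2, -1/2, -1/2, -1/2, 1/2;
       1,    1,    0,    0,    0,    0,    0,   0;
      -1,    1,    0,    0,    0,    0,    0,   0;
       0,   -1,    1,    0,    0,    0,    0,   0;
       0,    0,   -1,    1,    0,    0,    0,   0;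
       0,    0,    0,   -1,    1,    0,    0,   0;
       0,    0,    0,    0,   -1,    1,    0,   0;
       0,    0,    0,    0,    0,   -1,    1,   0]

theorem simpleRoots_mul_transpose : simpleRoots * simpleRootsᵀ = E₈.map Int.cast := by
  ext i j
  fin_cases i <;> fin_cases j <;>
    simp [simpleRoots, E₈, mul_apply, Fin.sum_univ_eight] <;> norm_num

theorem even_dotProduct_E₈_mulVec_self (z : Fin 8 → ℤ) : Even (z ⬝ᵥ E₈ *ᵥ z) :=
  even_dotProduct_mulVec_self E₈_isSymm (fun i => by rw [E₈_diag]; exact even_two) z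

theorem isUnit_E₈_det : IsUnit E₈.det := by
  rw [E₈_det]
  exact isUnit_one

/-- The lattice vector with given integral coordinates in the basis of simple roots. -/
def rootCombination : (Fin 8 → ℤ) →+ (Fin 8 → ℝ) :=
  simpleRoots.vecMulLinear.toAddMonoidHom.comp ((Int.castAddHom ℝ).compLeft (Fin 8))

theorem rootCombination_apply (y : Fin 8 → ℤ) :
    rootCombination y = (Int.cast ∘ y) ᵥ* simpleRoots := rfl

theorem rootCombination_injective : Function.Injective rootCombination := by
  have h_unit := isUnit_of_mul_transpose_eq_map_intCast isUnit_E₈_det simpleRoots_mul_transpose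
  exact (vecMul_injective_of_isUnit h_unit).comp (Int.cast_injective.comp_left)

theorem dot_rootCombination (y z : Fin 8 → ℤ) :
    dot (rootCombination y) (rootCombination z) = (y ⬝ᵥ E₈ *ᵥ z : ℤ) := by
  let cast := Int.castRingHom ℝ
  calc dot (rootCombination y) (rootCombination z)
      = (cast ∘ y) ⬝ᵥ (simpleRoots * simpleRootsᵀ) *ᵥ (cast ∘ z) := by
        rw [← mulVec_mulVec, mulVec_transpose, dotProduct_mulVec]
        rfl
    _ = (y ⬝ᵥ E₈ *ᵥ z : ℤ) := by
        rw [simpleRoots_mul_transpose]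
        exact (congrArg _ (map_mulVec_comp cast E₈ z)).trans
          (RingHom.map_dotProduct cast y (E₈ *ᵥ z)).symm

theorem inLambda_iff_exists {a : Fin 8 → ℝ} :
    inLambda a ↔
      ∃ (m : Fin 8 → ℤ) (p n : ℤ), (∀ i, a i = m i + p / 2) ∧ ∑ i, a i = 2 * n := by
  constructor
  · rintro ⟨h_int | h_half, n, hn⟩
    · choose m hm using h_int
      exact ⟨m, 0, n, fun i => by simp [hm i], hn⟩
    · choose m hm using h_half
      exact ⟨m, 1, n, fun i => by simp [hm i], hn⟩
  · rintro ⟨m, p, n, hm, hn⟩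
    refine ⟨?_, n, hn⟩
    obtain ⟨q, rfl | rfl⟩ := p.even_or_odd'
    · exact Or.inl fun i => ⟨m i + q, by rw [hm i]; push_cast; ring⟩
    · exact Or.inr fun i => ⟨m i + q, by rw [hm i]; push_cast; ring⟩

theorem exists_dot_eq_intCast {a b : Fin 8 → ℝ} (ha : inLambda a) (hb : inLambda b) :
    ∃ k : ℤ, dot a b = k := by
  obtain ⟨m, p, n, hm, hn⟩ := inLambda_iff_exists.mp ha
  obtain ⟨m', p', n', hm', hn'⟩ := inLambda_iff_exists.mp hb
  refine ⟨∑ i, m i * m' i + p * n' + p' * n - 2 * p * p', ?_⟩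
  simp only [hm, hm', dot, Fin.sum_univ_eight] at hn hn' ⊢
  push_cast
  linear_combination (p' / 2 : ℝ) * hn + (p / 2 : ℝ) * hn'

theorem inLambda_rootCombination (y : Fin 8 → ℤ) : inLambda (rootCombination y) := by
  -- Only the first simple root is half-integral, so `y 0 / 2` is the common fractional part.
  refine inLambda_iff_exists.mpr ⟨![y 1 - y 2, -y 0 + y 1 + y 2 - y 3, -y 0 + y 3 - y 4,
    -y 0 + y 4 - y 5, -y 0 + y 5 - y 6, -y 0 + y 6 - y 7, -y 0 + y 7, 0], y 0, y 1 - y 0, ?_, ?_⟩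
  · intro i
    fin_cases i <;>
      simp [rootCombination_apply, simpleRoots, vecMul, dotProduct, Fin.sum_univ_eight] <;> ring
  · simp [rootCombination_apply, simpleRoots, vecMul, dotProduct, Fin.sum_univ_eight]
    ring

theorem inLambda_simpleRoots (i : Fin 8) : inLambda (simpleRoots i) := by
  have h : rootCombination (Pi.single i 1) = simpleRoots i := by
    have h_cast : (Int.cast ∘ Pi.single i 1 : Fin 8 → ℝ) = Pi.single i 1 := by
      ext j
      simp [Pi.single_apply]
    rw [rootCombination_apply, h_cast, single_one_vecMul]
    rfl
  exact h ▸ inLambda_rootCombination _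

theorem inLambda_iff_mem_range {a : Fin 8 → ℝ} :
    inLambda a ↔ a ∈ Set.range rootCombination := by
  refine ⟨fun ha => ?_, ?_⟩
  · choose k hk using fun i => exists_dot_eq_intCast (inLambda_simpleRoots i) ha
    exact exists_intCast_vecMul_eq isUnit_E₈_det simpleRoots_mul_transpose
      (funext hk)
  · rintro ⟨y, rfl⟩
    exact inLambda_rootCombination y

theorem mem_relationCode_iff_exists_inLambda {ι : Type*} [Fintype ι] {y : ι → Fin 8 → ℤ}
    {c : ι → ZMod 2} :
    c ∈ relationCode y ↔
      ∃ x, inLambda x ∧ ∑ i ∈ codewordSupport c, rootCombination (y i) = (2 : ℝ) • x := by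
  simp only [mem_relationCode_iff, inLambda_iff_mem_range, Set.exists_range_iff,
    ofNat_smul_eq_nsmul, ← map_sum, ← map_nsmul, rootCombination_injective.eq_iff]

theorem ncard_subsets_eq_ncard_codewords {α : Type*} (K : Finset α) (p : Finset α → Prop) :
    {s | s ⊆ K ∧ p s}.ncard =
      {c : K → ZMod 2 | p ((codewordSupport c).map (Function.Embedding.subtype _))}.ncard := by
  classical
  let subset_of (c : K → ZMod 2) : Finset α :=
    (codewordSupport c).map (Function.Embedding.subtype _)
  have h_inj : Function.Injective subset_of :=
    (Finset.map_injective _).comp codewordSupport_bijective.injective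
  have h_image : {s | s ⊆ K ∧ p s} = subset_of '' {c | p (subset_of c)} := by
    ext s
    constructor
    · rintro ⟨hsK, hs⟩
      obtain ⟨c, hc⟩ := codewordSupport_bijective.surjective (s.subtype (· ∈ K))
      have h : subset_of c = s := by
        simp only [subset_of, hc]
        exact Finset.subtype_map_of_mem hsK
      exact ⟨c, by rwa [Set.mem_ofPred_eq, h], h⟩
    · rintro ⟨c, hc, rfl⟩
      exact ⟨fun i hi => Finset.property_of_mem_map_subtype _ hi, hc⟩
  rw [h_image, Set.ncard_image_of_injective _ h_inj]

theorem dotProduct_E₈_mulVec_eq_ite {ι : Type*} [DecidableEq ι] {y : ι → Fin 8 → ℤ}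
    (hroot : ∀ i, isRoot (rootCombination (y i)))
    (horth : Pairwise fun i j => dot (rootCombination (y i)) (rootCombination (y j)) = 0)
    (i j : ι) : y i ⬝ᵥ E₈ *ᵥ y j = if i = j then 2 else 0 := by
  rw [← Int.cast_inj (α := ℝ), ← dot_rootCombination]
  split_ifs with h
  · rw [h, (hroot j).2, Int.cast_ofNat]
  · rw [horth h, Int.cast_zero]

theorem ncard_subsets_sum_mem_two_smul_eq_ncard_codewords {K : Finset (Fin 8 → ℝ)}
    {y : K → Fin 8 → ℤ} (hy : ∀ e, rootCombination (y e) = e) (w : ℕ) :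
    {s : Finset (Fin 8 → ℝ) | s ⊆ K ∧ s.card = w ∧
      ∃ x, inLambda x ∧ (∑ e ∈ s, e) = (2 : ℝ) • x}.ncard =
      {c | c ∈ relationCode y ∧ hammingNorm c = w}.ncard := by
  rw [ncard_subsets_eq_ncard_codewords]
  simp only [mem_relationCode_iff_exists_inLambda, hy, Finset.card_map, Finset.sum_map,
    card_codewordSupport, Function.Embedding.subtype_apply, and_comm]

end E8

/-- With `n₅ = 1`, `n₆ = 3`, `n₇ = 7`, `n₈ = 14`: if `K` is a set of
`r ∈ {5,6,7,8}` pairwise orthogonal roots, then exactly `n_r` of the 4-element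
subsets of `K` have their four elements summing to an element of `2Λ`. -/
theorem stmt_11 (r n : ℕ)
    (hrn : (r, n) ∈ ({(5, 1), (6, 3), (7, 7), (8, 14)} : Set (ℕ × ℕ)))
    (K : Finset (Fin 8 → ℝ)) (hcard : K.card = r)
    (hroot : ∀ e ∈ K, isRoot e)
    (horth : ∀ e ∈ K, ∀ f ∈ K, e ≠ f → dot e f = 0) :
    {s : Finset (Fin 8 → ℝ) | s ⊆ K ∧ s.card = 4 ∧
      ∃ x, inLambda x ∧ (∑ e ∈ s, e) = (2 : ℝ) • x}.ncard = n := by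
  choose y hy using fun e : K => inLambda_iff_mem_range.mp (hroot e e.2).1
  have h_gram := dotProduct_E₈_mulVec_eq_ite (y := y) (by simpa [hy] using hroot)
    fun e f h_ne => by simpa [hy] using horth e e.2 f f.2 (Subtype.coe_ne_coe.mpr h_ne)
  have h_code : IsDoublyEven (relationCode y) :=
    isDoublyEven_relationCode even_dotProduct_E₈_mulVec_self h_gram
  have h_card : Fintype.card K = r := (Fintype.card_coe K).trans hcard
  have h_range : 5 ≤ r ∧ r ≤ 8 := by
    rcases hrn with h | h | h | h <;> cases h <;> decide
  have h_finrank : Module.finrank (ZMod 2) (relationCode y) = r - 4 := by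
    have h_le := h_code.finrank_add_four_le_card (by lia)
    have h_ge := two_mul_card_le_two_mul_finrank_relationCode_add
      (G := CartanMatrix.E₈) (y := y) (by rw [CartanMatrix.E₈_det]; exact odd_one)
      fun e f => by rw [h_gram]; split_ifs <;> decide
    rw [Fintype.card_fin] at h_ge
    lia
  rw [ncard_subsets_sum_mem_two_smul_eq_ncard_codewords hy]
  rcases h_range.2.lt_or_eq with h_lt | rfl
  · rw [h_code.ncard_hammingNorm_eq_four_of_card_lt (h_card.trans_lt h_lt), h_finrank]
    rcases hrn with h | h | h | h <;> cases h <;> first | rfl | lia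
  · rw [h_code.ncard_hammingNorm_eq_four_of_card_eq h_card (h_code.one_mem h_card (by lia)),
      h_finrank]
    rcases hrn with h | h | h | h <;> cases h
    rfl
end
end
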